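/- arXiv:0810.2497 — 3 statements merged into one kernel-verified Lean document; each statement's English description precedes it below -/
import Mathlib

section
/- Let H be an infinite-dimensional separable complex Hilbert space, T a bounded linear operator on H, and p(t) = (t−t₁)⋯(t−tₙ) a polynomial with distinct real roots t₁,…,tₙ. If p(T) is a compact operator, then there exists a compact operator K on H such that p(T+K) = 0 and ‖T+K‖ = ‖T‖_e, where ‖T‖_e denotes the essential norm of T, i.e. the norm of the image of T in the Calkin algebra B(H)/K(H). -/
/-!
Choose a compact perturbation `S` of `T` with `‖S‖ = ‖T‖ₑ` and factor the minimal polynomial of `T`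
in the Calkin algebra as `∏ (X - tᵢ)`; each `tᵢ` is in the spectrum of `S`, so `|tᵢ| ≤ ‖S‖`.
Splitting off one factor at a time by projections separating two operators whose product is compact,
`S` becomes, modulo compacts, upper triangular with diagonal `tᵢ` with respect to a finite
orthogonal decomposition. Removing the compact blocks yields an operator that satisfies the
polynomial exactly, but its norm may exceed `‖S‖`.

The norm is restored as follows. Blocks with `|tᵢ| = ‖S‖` are extremal, hence decouple from the
others modulo compacts, so the strictly triangular part `U` lives on the blocks with
`|tᵢ| ≤ ‖S‖ - δ`. The excess over the norm bound is dominated, in the sense of quadratic forms, by a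
positive compact operator `E` commuting with the decomposition. Replacing `U` by `A U A` with
`A = √(δ / (δ + E))`, which is `1` modulo compacts, keeps the triangular form and uses the slack `δ`
on these blocks to absorb `E`.
-/

open Polynomial
open scoped InnerProductSpace

namespace PolynomiallyCompact

variable {H : Type*} [NormedAddCommGroup H] [InnerProductSpace ℂ H]

section CalkinAlgebra

variable (H) in
/-- The two-sided ideal of compact operators in the algebra of bounded operators on `H`. -/
def compactIdeal : TwoSidedIdeal (H →L[ℂ] H) :=
  .mk' {A | IsCompactOperator A} isCompactOperator_zero .add .neg
    (fun h => h.clm_comp _) (fun h => h.comp_clm _)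

lemma mem_compactIdeal {A : H →L[ℂ] H} : A ∈ compactIdeal H ↔ IsCompactOperator A :=
  TwoSidedIdeal.mem_mk' ..

variable (H) in
/-- The Calkin algebra of `H`, as a plain algebra: the essential norm is kept separate. -/
abbrev Calkin : Type _ := (compactIdeal H).ringCon.Quotient

/-- The class of an operator in the Calkin algebra. -/
def toCalkin : (H →L[ℂ] H) →ₐ[ℂ] Calkin H := (compactIdeal H).ringCon.mkₐ ℂ

lemma toCalkin_eq_iff {A B : H →L[ℂ] H} :
    toCalkin A = toCalkin B ↔ IsCompactOperator (A - B) := by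
  rw [toCalkin, RingCon.mkₐ_apply, RingCon.mkₐ_apply, RingCon.eq, TwoSidedIdeal.rel_iff,
    mem_compactIdeal]

lemma toCalkin_eq_zero_iff {A : H →L[ℂ] H} : toCalkin A = 0 ↔ IsCompactOperator A := by
  rw [← map_zero toCalkin, toCalkin_eq_iff, sub_zero]

lemma toCalkin_eq_zero_of_approx [CompleteSpace H] {A : H →L[ℂ] H}
    (h : ∀ ε > 0, ∃ B, toCalkin B = toCalkin A ∧ ‖B‖ ≤ ε) : toCalkin A = 0 := by
  have hclosed : IsClosed {S : H →L[ℂ] H | IsCompactOperator S} :=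
    isClosed_setOfPred_isCompactOperator
  refine toCalkin_eq_zero_iff.2 (hclosed.closure_subset (Metric.mem_closure_iff.2 fun ε hε => ?_))
  obtain ⟨B, hBA, hB⟩ := h (ε / 2) (half_pos hε)
  refine ⟨A - B, toCalkin_eq_iff.1 hBA.symm, ?_⟩
  rw [dist_eq_norm, sub_sub_cancel]
  exact hB.trans_lt (half_lt_self hε)

/-- The essential norm of an operator: its distance to the compact operators. -/
noncomputable def essNorm (T : H →L[ℂ] H) : ℝ :=
  Metric.infDist T {S : H →L[ℂ] H | IsCompactOperator S}

lemma essNorm_nonneg (T : H →L[ℂ] H) : 0 ≤ essNorm T := Metric.infDist_nonneg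

lemma essNorm_le_norm {S T : H →L[ℂ] H} (h : toCalkin S = toCalkin T) : essNorm T ≤ ‖S‖ := by
  have hmem : T - S ∈ {S : H →L[ℂ] H | IsCompactOperator S} := toCalkin_eq_iff.1 h.symm
  simpa [essNorm, dist_eq_norm] using Metric.infDist_le_dist_of_mem (x := T) hmem

lemma exists_norm_lt_of_essNorm_lt {T : H →L[ℂ] H} {r : ℝ} (h : essNorm T < r) :
    ∃ S, toCalkin S = toCalkin T ∧ ‖S‖ < r := by
  obtain ⟨K, hK, hKr⟩ := (Metric.infDist_lt_iff ⟨0, isCompactOperator_zero⟩).1 h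
  refine ⟨T - K, ?_, by rwa [← dist_eq_norm]⟩
  rw [map_sub, toCalkin_eq_zero_iff.2 hK, sub_zero]

lemma nontrivial_calkin (hdim : ¬ FiniteDimensional ℂ H) : Nontrivial (Calkin H) := by
  refine ⟨1, 0, fun h => hdim ?_⟩
  rw [← map_one toCalkin, toCalkin_eq_zero_iff] at h
  exact FiniteDimensional.of_isCompactOperator_id h

end CalkinAlgebra

section FunctionalCalculus

variable [CompleteSpace H]

lemma norm_le_norm_of_mem_spectrum {𝕜 : Type*} [NormedField 𝕜] [NormedAlgebra 𝕜 (H →L[ℂ] H)]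
    {A : H →L[ℂ] H} {k : 𝕜} (hk : k ∈ spectrum 𝕜 A) : ‖k‖ ≤ ‖A‖ :=
  (spectrum.norm_le_norm_mul_of_mem hk).trans
    (mul_le_of_le_one_right (norm_nonneg A) ContinuousLinearMap.norm_id_le)

lemma norm_cfc_sub_aeval_le {A : H →L[ℂ] H} (hA : IsSelfAdjoint A) {f : ℝ → ℝ}
    (hf : Continuous f) {q : ℝ[X]} {r ε : ℝ} (hr : ‖A‖ ≤ r) (hε : 0 ≤ ε)
    (hq : ∀ x ∈ Set.Icc (-r) r, |q.eval x - f x| ≤ ε) : ‖cfc f A - aeval A q‖ ≤ ε := by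
  rw [← cfc_polynomial q A, ← cfc_sub f q.eval A hf.continuousOn q.continuous.continuousOn]
  refine norm_cfc_le hε fun x hx => ?_
  rw [Real.norm_eq_abs, abs_sub_comm]
  exact hq x (abs_le.1 ((norm_le_norm_of_mem_spectrum hx).trans hr))

lemma toCalkin_cfc_congr {A B : H →L[ℂ] H} (hA : IsSelfAdjoint A) (hB : IsSelfAdjoint B)
    (h : toCalkin A = toCalkin B) {f : ℝ → ℝ} (hf : Continuous f) :
    toCalkin (cfc f A) = toCalkin (cfc f B) := by
  rw [← sub_eq_zero, ← map_sub]
  refine toCalkin_eq_zero_of_approx fun ε hε => ?_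
  set r := max ‖A‖ ‖B‖
  obtain ⟨q, hq⟩ :=
    exists_polynomial_near_of_continuousOn (-r) r f hf.continuousOn (ε / 2) (half_pos hε)
  have hqAB : toCalkin (aeval A q) = toCalkin (aeval B q) := by
    rw [← aeval_map_algebraMap ℂ A, ← aeval_map_algebraMap ℂ B, ← aeval_algHom_apply,
      ← aeval_algHom_apply, h]
  refine ⟨(cfc f A - aeval A q) - (cfc f B - aeval B q), ?_, ?_⟩
  · simp only [map_sub, hqAB, sub_sub_sub_cancel_right]
  · have hAq := norm_cfc_sub_aeval_le hA hf (le_max_left _ _) (half_pos hε).le fun x hx =>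
      (hq x hx).le
    have hBq := norm_cfc_sub_aeval_le hB hf (le_max_right _ _) (half_pos hε).le fun x hx =>
      (hq x hx).le
    exact (norm_sub_le_of_le hAq hBq).trans_eq (add_halves ε)

lemma toCalkin_cfc_of_toCalkin_eq_zero {A : H →L[ℂ] H} (hA : IsSelfAdjoint A)
    (h : toCalkin A = 0) {f : ℝ → ℝ} (hf : Continuous f) (hf₀ : f 0 = 1) :
    toCalkin (cfc f A) = 1 := by
  rw [toCalkin_cfc_congr hA (.zero _) (h.trans (map_zero _).symm) hf, cfc_apply_zero, hf₀,
    map_one, map_one]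

lemma norm_mul_cfc_star_mul_self_le {T : H →L[ℂ] H} {f : ℝ → ℝ} (hf : Continuous f) {r : ℝ}
    (hr : 0 ≤ r) (h : ∀ x, 0 ≤ x → x ≤ ‖T‖ ^ 2 → √x * |f x| ≤ r) :
    ‖T * cfc f (star T * T)‖ ≤ r := by
  have hT : IsSelfAdjoint (star T * T) := .star_mul_self T
  have hsq : star (T * cfc f (star T * T)) * (T * cfc f (star T * T)) =
      cfc (fun x => f x * x * f x) (star T * T) := by
    rw [star_mul, (IsSelfAdjoint.cfc (f := f)).star_eq,
      cfc_mul (fun x => f x * x) f _ (by fun_prop), cfc_mul f (fun x => x) _ (by fun_prop),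
      cfc_id' ℝ (star T * T)]
    noncomm_ring
  refine abs_le_of_sq_le_sq' ?_ hr |>.2
  rw [sq, ← CStarRing.norm_star_mul_self, hsq]
  refine norm_cfc_le (sq_nonneg r) fun x hx => ?_
  have hx₀ : 0 ≤ x := spectrum_nonneg_of_nonneg (star_mul_self_nonneg T) hx
  have hxT : x ≤ ‖T‖ ^ 2 := by
    rw [sq, ← CStarRing.norm_star_mul_self]
    exact (le_abs_self x).trans (norm_le_norm_of_mem_spectrum hx)
  calc ‖f x * x * f x‖ = (√x * |f x|) ^ 2 := by
        rw [mul_pow, Real.sq_sqrt hx₀, sq_abs, Real.norm_of_nonneg]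
        · ring
        · nlinarith [mul_nonneg hx₀ (sq_nonneg (f x))]
    _ ≤ r ^ 2 := by gcongr; exact h x hx₀ hxT

lemma norm_mul_le_norm_mul_of_star_mul_self_le {A B : H →L[ℂ] H}
    (h : star A * A ≤ star B * B) (C : H →L[ℂ] H) : ‖A * C‖ ≤ ‖B * C‖ := by
  refine abs_le_of_sq_le_sq' ?_ (norm_nonneg _) |>.2
  simp only [sq, ← CStarRing.norm_star_mul_self]
  refine CStarAlgebra.norm_le_norm_of_nonneg_of_le (star_mul_self_nonneg _) ?_
  simpa only [star_mul, mul_assoc] using star_left_conjugate_le_conjugate h C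

/-- A cutoff concentrated near `0`: its value at `0` is `1`, and its product with `√x` is at most
`ε`. -/
noncomputable def cutoff (ε x : ℝ) : ℝ := ε ^ 2 / (ε ^ 2 + |x|)

lemma continuous_cutoff {ε : ℝ} (hε : 0 < ε) : Continuous (cutoff ε) := by
  unfold cutoff
  exact continuous_const.div (by fun_prop) fun x => by positivity

lemma cutoff_zero {ε : ℝ} (hε : 0 < ε) : cutoff ε 0 = 1 := by
  rw [cutoff, abs_zero, add_zero, div_self (pow_pos hε 2).ne']

lemma sqrt_mul_cutoff_le {ε x : ℝ} (hε : 0 < ε) (hx : 0 ≤ x) : √x * |cutoff ε x| ≤ ε := by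
  have hden : 0 < ε ^ 2 + x := by positivity
  rw [cutoff, abs_of_nonneg hx, abs_of_nonneg (by positivity), ← mul_div_assoc, div_le_iff₀ hden]
  have hamgm : √x * ε ≤ ε ^ 2 + x := by
    nlinarith [Real.sq_sqrt hx, sq_nonneg (√x - ε), sq_nonneg (√x + ε)]
  calc √x * ε ^ 2 = ε * (√x * ε) := by ring
    _ ≤ ε * (ε ^ 2 + x) := by gcongr

lemma toCalkin_eq_zero_of_star_mul_self_le {A N : H →L[ℂ] H} (h : star A * A ≤ N)
    (hN : toCalkin N = 0) : toCalkin A = 0 := by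
  obtain ⟨B, rfl⟩ := CStarAlgebra.nonneg_iff_eq_star_mul_self.1 ((star_mul_self_nonneg A).trans h)
  refine toCalkin_eq_zero_of_approx fun ε hε => ⟨A * cfc (cutoff ε) (star B * B), ?_, ?_⟩
  · rw [map_mul, toCalkin_cfc_of_toCalkin_eq_zero (.star_mul_self B) hN (continuous_cutoff hε)
      (cutoff_zero hε), mul_one]
  · exact (norm_mul_le_norm_mul_of_star_mul_self_le h _).trans
      (norm_mul_cfc_star_mul_self_le (continuous_cutoff hε) hε.le fun x hx _ =>
        sqrt_mul_cutoff_le hε hx)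

lemma toCalkin_star_mul_self_eq_zero_iff {A : H →L[ℂ] H} :
    toCalkin (star A * A) = 0 ↔ toCalkin A = 0 :=
  ⟨toCalkin_eq_zero_of_star_mul_self_le le_rfl, fun h => by rw [map_mul, h, mul_zero]⟩

lemma toCalkin_star_eq_zero {A : H →L[ℂ] H} (h : toCalkin A = 0) : toCalkin (star A) = 0 := by
  rw [← toCalkin_star_mul_self_eq_zero_iff, star_star, map_mul, h, zero_mul]

lemma toCalkin_mul_star_self_eq_zero_iff {A : H →L[ℂ] H} :
    toCalkin (A * star A) = 0 ↔ toCalkin A = 0 := by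
  refine ⟨fun h => ?_, fun h => by rw [map_mul, h, zero_mul]⟩
  simpa only [star_star] using
    toCalkin_star_eq_zero (toCalkin_eq_zero_of_star_mul_self_le (A := star A)
      (by rw [star_star]) h)

lemma toCalkin_star_congr {A B : H →L[ℂ] H} (h : toCalkin A = toCalkin B) :
    toCalkin (star A) = toCalkin (star B) := by
  rw [← sub_eq_zero, ← map_sub, ← star_sub]
  exact toCalkin_star_eq_zero (by rw [map_sub, h, sub_self])

end FunctionalCalculus

section EssentialNorm

variable [CompleteSpace H]

/-- The multiplier `c / max √x c`, for which `√x` times it is `min √x c`; it is `0` when `c = 0`. -/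
noncomputable def truncation (c x : ℝ) : ℝ := c / max √x c

lemma continuous_truncation {c : ℝ} (hc : 0 ≤ c) : Continuous (truncation c) := by
  unfold truncation
  rcases hc.eq_or_lt with rfl | hc
  · simpa only [zero_div] using continuous_const
  · exact continuous_const.div (by fun_prop) fun x => (hc.trans_le (le_max_right _ _)).ne'

lemma sqrt_mul_abs_truncation_le {c : ℝ} (hc : 0 ≤ c) (x : ℝ) : √x * |truncation c x| ≤ c := by
  have hmax : 0 ≤ max √x c := hc.trans (le_max_right _ _)
  rw [truncation, abs_of_nonneg (div_nonneg hc hmax), mul_div_left_comm]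
  exact mul_le_of_le_one_right hc (div_le_one_of_le₀ (le_max_left _ _) hmax)

lemma sqrt_mul_abs_one_sub_truncation_le {c ε x : ℝ} (hc : 0 ≤ c) (hε : 0 ≤ ε)
    (h : √x ≤ c + ε) : √x * |1 - truncation c x| ≤ ε := by
  rcases (Real.sqrt_nonneg x).eq_or_lt with hx | hx
  · rwa [← hx, zero_mul]
  · have hmax : 0 < max √x c := hx.trans_le (le_max_left _ _)
    rw [truncation, one_sub_div hmax.ne', abs_of_nonneg (div_nonneg (by simp) hmax.le),
      ← mul_div_assoc, div_le_iff₀ hmax]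
    rcases le_total √x c with hxc | hxc
    · rw [max_eq_right hxc, sub_self, mul_zero]
      positivity
    · rw [max_eq_left hxc, mul_comm ε]
      gcongr
      linarith

-- Truncating the modulus of `T` at the essential norm only removes a compact part, because the
-- removed part of any `S` congruent to `T` with `‖S‖ < essNorm T + ε` has norm at most `ε`.
lemma exists_norm_eq_essNorm (T : H →L[ℂ] H) :
    ∃ S, toCalkin S = toCalkin T ∧ ‖S‖ = essNorm T := by
  have hc := essNorm_nonneg T
  have hm := continuous_truncation hc
  set c := essNorm T
  suffices hST : toCalkin (T * cfc (truncation c) (star T * T)) = toCalkin T from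
    ⟨_, hST, (norm_mul_cfc_star_mul_self_le hm hc fun x _ _ =>
      sqrt_mul_abs_truncation_le hc x).antisymm (essNorm_le_norm hST)⟩
  have hm' : Continuous fun x => 1 - truncation c x := continuous_const.sub hm
  have hcompl : 1 - cfc (truncation c) (star T * T) =
      cfc (fun x => 1 - truncation c x) (star T * T) := by
    rw [cfc_sub _ _ _ continuousOn_const hm.continuousOn, cfc_const_one ℝ (star T * T)]
  rw [eq_comm, ← sub_eq_zero, ← map_sub, ← mul_one_sub, hcompl]
  refine toCalkin_eq_zero_of_approx fun ε hε => ?_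
  obtain ⟨S, hST, hS⟩ := exists_norm_lt_of_essNorm_lt (lt_add_of_pos_right (essNorm T) hε)
  refine ⟨S * cfc (fun x => 1 - truncation c x) (star S * S), ?_, ?_⟩
  · have hsq : toCalkin (star S * S) = toCalkin (star T * T) := by
      rw [map_mul, map_mul, hST, toCalkin_star_congr hST]
    rw [map_mul, map_mul, hST, toCalkin_cfc_congr (.star_mul_self S) (.star_mul_self T) hsq hm']
  · refine norm_mul_cfc_star_mul_self_le hm' hε.le fun x _ hx => ?_
    exact sqrt_mul_abs_one_sub_truncation_le hc hε.le
      ((Real.sqrt_le_left (norm_nonneg S)).2 hx |>.trans hS.le)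

end EssentialNorm

section SpectralSeparation

variable [CompleteSpace H]

lemma toCalkin_congr_of_mul_self {A B : H →L[ℂ] H} (hA : 0 ≤ A) (hB : 0 ≤ B)
    (h : toCalkin (A * A) = toCalkin (B * B)) : toCalkin A = toCalkin B := by
  have cfc_sqrt_mul_self {C : H →L[ℂ] H} (hC : 0 ≤ C) : cfc Real.sqrt (C * C) = C := by
    rw [← cfcₙ_eq_cfc, ← CFC.sqrt_eq_real_sqrt _ (Commute.refl C |>.mul_nonneg hC hC),
      CFC.sqrt_mul_self C]
  rw [← cfc_sqrt_mul_self hA, ← cfc_sqrt_mul_self hB]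
  exact toCalkin_cfc_congr (.of_nonneg (Commute.refl A |>.mul_nonneg hA hA))
    (.of_nonneg (Commute.refl B |>.mul_nonneg hB hB)) h Real.continuous_sqrt

-- Modulo compacts, `(y - x)²` and `(y + x)²` agree, hence `|y - x|` agrees with `y + x`.
lemma toCalkin_posPart_sub {x y : H →L[ℂ] H} (hx : 0 ≤ x) (hy : 0 ≤ y)
    (hxy : toCalkin (x * y) = 0) : toCalkin (y - x)⁺ = toCalkin y := by
  have hyx : toCalkin (y * x) = 0 := by
    rw [← hx.star_eq, ← hy.star_eq, ← star_mul]
    exact toCalkin_star_eq_zero hxy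
  have hsa : IsSelfAdjoint (y - x) := (IsSelfAdjoint.of_nonneg hy).sub (.of_nonneg hx)
  have habs : toCalkin (CFC.abs (y - x)) = toCalkin (y + x) := by
    refine toCalkin_congr_of_mul_self (CFC.abs_nonneg _) (add_nonneg hy hx) ?_
    rw [CFC.abs_mul_abs, hsa.star_eq]
    simp only [sub_mul, mul_sub, add_mul, mul_add, map_sub, map_add, hxy, hyx]
    abel
  have htwo := congrArg toCalkin (CFC.abs_add_self (y - x))
  rw [map_add, habs, ← map_add, map_nsmul, add_add_sub_cancel, ← two_nsmul, map_nsmul] at htwo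
  simpa only [← ofNat_smul_eq_nsmul ℂ, smul_right_inj (two_ne_zero' ℂ)] using htwo.symm

lemma toCalkin_negPart_sub {x y : H →L[ℂ] H} (hx : 0 ≤ x) (hy : 0 ≤ y)
    (hxy : toCalkin (x * y) = 0) : toCalkin (y - x)⁻ = toCalkin x := by
  have hsa : IsSelfAdjoint (y - x) := (IsSelfAdjoint.of_nonneg hy).sub (.of_nonneg hx)
  have hparts := congrArg toCalkin (CFC.posPart_sub_negPart (y - x))
  rw [map_sub, map_sub, toCalkin_posPart_sub hx hy hxy] at hparts
  exact sub_right_injective hparts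

lemma mul_posPart_eq_zero {A Z : H →L[ℂ] H} (hA : IsSelfAdjoint A) (h : Z * A = 0) :
    Z * A⁺ = 0 := by
  have hsq : A * A⁺ = A⁺ * A⁺ := by
    nth_rw 1 [← CFC.posPart_sub_negPart A]
    rw [sub_mul, CFC.negPart_mul_posPart, sub_zero]
  rw [← CStarRing.mul_star_self_eq_zero_iff, star_mul, (CFC.posPart_nonneg A).star_eq]
  calc Z * A⁺ * (A⁺ * star Z) = Z * (A⁺ * A⁺) * star Z := by noncomm_ring
    _ = Z * A * A⁺ * star Z := by rw [← hsq, mul_assoc Z A]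
    _ = 0 := by rw [h, zero_mul, zero_mul]

lemma exists_range_projection (B : H →L[ℂ] H) :
    ∃ P : H →L[ℂ] H, IsStarProjection P ∧ P * B = B ∧ ∀ Z : H →L[ℂ] H, Z * B = 0 → Z * P = 0 := by
  set R := B.range.topologicalClosure
  have hBR (v : H) : B v ∈ R := B.range.le_topologicalClosure ⟨v, rfl⟩
  refine ⟨R.starProjection, isStarProjection_starProjection, ?_, fun Z hZ => ?_⟩
  · ext v
    exact Submodule.starProjection_eq_self_iff.2 (hBR v)
  · have hker : R ≤ Z.ker := by
      refine Submodule.topologicalClosure_minimal _ ?_ Z.isClosed_ker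
      rintro _ ⟨v, rfl⟩
      exact DFunLike.congr_fun hZ v
    ext v
    exact hker (Submodule.starProjection_apply_mem R v)

lemma exists_projection_separating {F X Y : H →L[ℂ] H} (hF : IsStarProjection F)
    (hX : X * F = X) (hY : F * Y = Y) (hXY : toCalkin (X * Y) = 0) :
    ∃ P : H →L[ℂ] H, IsStarProjection P ∧ F * P = P ∧ toCalkin (X * P) = 0 ∧
      toCalkin ((F - P) * Y) = 0 := by
  set x := star X * X
  set y := Y * star Y
  have hx : 0 ≤ x := star_mul_self_nonneg X
  have hy : 0 ≤ y := mul_star_self_nonneg Y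
  have hsa : IsSelfAdjoint (y - x) := (IsSelfAdjoint.of_nonneg hy).sub (.of_nonneg hx)
  have hxy : toCalkin (x * y) = 0 := by
    rw [show x * y = star X * (X * Y) * star Y by simp only [x, y, mul_assoc], map_mul, map_mul,
      hXY, mul_zero, zero_mul]
  have hFA : (1 - F) * (y - x)⁺ = 0 := by
    have hFX : F * star X = star X := by
      rw [← hF.isSelfAdjoint.star_eq, ← star_mul, hX]
    refine mul_posPart_eq_zero hsa ?_
    rw [mul_sub, ← mul_assoc, ← mul_assoc, sub_mul 1 F, sub_mul 1 F, hY, hFX]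
    simp only [one_mul, sub_self, zero_mul]
  obtain ⟨P, hP, hPA, hPann⟩ := exists_range_projection (y - x)⁺
  have hFP : F * P = P := by
    simpa only [sub_mul, one_mul, sub_eq_zero, eq_comm] using hPann _ hFA
  have hAP : (y - x)⁻ * P = 0 := hPann _ (CFC.negPart_mul_posPart _)
  refine ⟨P, hP, hFP, ?_, ?_⟩
  · rw [← toCalkin_star_mul_self_eq_zero_iff,
      show star (X * P) * (X * P) = star P * (x * P) by simp only [x, star_mul, mul_assoc],
      map_mul, map_mul, ← toCalkin_negPart_sub hx hy hxy, ← map_mul, hAP, map_zero, mul_zero]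
  · have hFPA : (F - P) * (y - x)⁺ = 0 := by
      rw [sub_mul, hPA, ← neg_sub, ← one_sub_mul, hFA, neg_zero]
    rw [← toCalkin_mul_star_self_eq_zero_iff,
      show (F - P) * Y * star ((F - P) * Y) = (F - P) * y * star (F - P) by
        simp only [y, star_mul, mul_assoc],
      map_mul, map_mul, ← toCalkin_posPart_sub hx hy hxy, ← map_mul, hFPA, map_zero, zero_mul]

end SpectralSeparation

section Triangular

lemma orthogonalIdempotents_finCons {R : Type*} [Semiring R] {n : ℕ} {e : Fin n → R}
    (he : OrthogonalIdempotents e) {x : R} (hx : IsIdempotentElem x)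
    (hxe : x * ∑ i, e i = 0) (hex : (∑ i, e i) * x = 0) :
    OrthogonalIdempotents (Fin.cons x e : Fin (n + 1) → R) := by
  convert (OrthogonalIdempotents.equiv (finSuccEquiv n)).2 (he.option x hx hxe hex) using 1
  funext i
  cases i using Fin.cases <;> rfl

lemma aeval_X_sub_C_eq {R A : Type*} [CommRing R] [Ring A] [Algebra R A] (x : A) (a : R) :
    aeval x (X - C a) = x - a • 1 := by
  rw [map_sub, aeval_X, aeval_C, Algebra.algebraMap_eq_smul_one]

lemma aeval_prod_mul_eq_zero_of_triangular {R A ι : Type*} [CommRing R] [Ring A] [Algebra R A]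
    [Fintype ι] [LinearOrder ι] {x : A} {Q : ι → A} (hQ : CompleteOrthogonalIdempotents Q)
    {t : ι → R} (htri : ∀ i j, j ≤ i → Q i * (x - t j • 1) * Q j = 0) (j : ι) :
    ∀ s : Finset ι, (∀ i ≤ j, i ∈ s) → aeval x (∏ i ∈ s, (X - C (t i))) * Q j = 0 := by
  induction j using WellFoundedLT.induction with
  | ind j ih =>
    intro s hs
    have hcolumn : (x - t j • 1) * Q j = ∑ i, Q i * ((x - t j • 1) * Q j) := by
      rw [← Finset.sum_mul, hQ.complete, one_mul]
    rw [← Finset.prod_erase_mul s _ (hs j le_rfl), map_mul, mul_assoc,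
      aeval_X_sub_C_eq, hcolumn, Finset.mul_sum]
    refine Finset.sum_eq_zero fun i _ => ?_
    rcases le_or_gt j i with hji | hij
    · rw [← mul_assoc (Q i), htri i j hji, mul_zero]
    · rw [← mul_assoc, ih i hij _ fun k hk => Finset.mem_erase.2
        ⟨(hk.trans_lt hij).ne, hs k (hk.trans hij.le)⟩, zero_mul]

lemma aeval_prod_eq_zero_of_triangular {R A ι : Type*} [CommRing R] [Ring A] [Algebra R A]
    [Fintype ι] [LinearOrder ι] {x : A} {Q : ι → A} (hQ : CompleteOrthogonalIdempotents Q)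
    {t : ι → R} (htri : ∀ i j, j ≤ i → Q i * (x - t j • 1) * Q j = 0) :
    aeval x (∏ i, (X - C (t i))) = 0 := by
  rw [← mul_one (aeval x _), ← hQ.complete, Finset.mul_sum]
  exact Finset.sum_eq_zero fun j _ =>
    aeval_prod_mul_eq_zero_of_triangular hQ htri j _ fun i _ => Finset.mem_univ i

variable [CompleteSpace H]

-- `E` separates the operators `F(T - a)F` and `FR`, whose product is compact.
lemma exists_projection_splitting {T F R : H →L[ℂ] H} {a : ℂ} (hF : IsStarProjection F)
    (hFT : toCalkin (F * T * (1 - F)) = 0) (hR : toCalkin (F * ((T - a • 1) * R)) = 0) :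
    ∃ E : H →L[ℂ] H, IsStarProjection E ∧ F * E = E ∧ E * F = E ∧
      toCalkin (F * (T - a • 1) * E) = 0 ∧ toCalkin ((F - E) * T * (1 - (F - E))) = 0 ∧
      toCalkin ((F - E) * R) = 0 := by
  set L := T - a • 1 with hL
  have hFF : F * F = F := hF.isIdempotentElem
  have hFL : toCalkin (F * L * (1 - F)) = 0 := by
    rw [hL, mul_sub F, sub_mul, map_sub, hFT, mul_smul_comm, mul_one, smul_mul_assoc,
      hF.mul_one_sub_self, smul_zero, map_zero, sub_zero]
  have hLR : toCalkin (F * L * F * (F * R)) = 0 := by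
    rw [show F * L * F * (F * R) = F * (L * R) - F * L * (1 - F) * R by
      rw [mul_assoc _ F, ← mul_assoc F F, hFF]; noncomm_ring, map_sub, hR, map_mul, hFL, zero_mul,
      sub_zero]
  obtain ⟨E, hE, hFE, hLE, hFER⟩ := exists_projection_separating hF
    (show F * L * F * F = F * L * F by rw [mul_assoc _ F, hFF])
    (show F * (F * R) = F * R by rw [← mul_assoc, hFF]) hLR
  have hEF : E * F = E := by
    simpa only [star_mul, hE.isSelfAdjoint.star_eq, hF.isSelfAdjoint.star_eq] using
      congrArg star hFE
  rw [mul_assoc _ F, hFE] at hLE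
  have hdiffF : (F - E) * F = F - E := by rw [sub_mul, hFF, hEF]
  have hdiffE : (F - E) * E = 0 := by rw [sub_mul, hFE, hE.isIdempotentElem.eq, sub_self]
  refine ⟨E, hE, hFE, hEF, hLE, ?_, by rwa [← mul_assoc, hdiffF] at hFER⟩
  have hsplit : (F - E) * T * (1 - (F - E)) =
      (F - E) * (F * T * (1 - F)) + (F - E) * (F * L * E) := by
    rw [mul_assoc F T, mul_assoc F L, ← mul_assoc _ F, ← mul_assoc _ F, hdiffF, hL, sub_mul T,
      mul_sub (F - E) (T * E), smul_mul_assoc, mul_smul_comm, one_mul, hdiffE, smul_zero, sub_zero]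
    noncomm_ring
  rw [hsplit, map_add, map_mul _ (F - E), map_mul _ (F - E), hFT, hLE, mul_zero, add_zero]

theorem exists_essentially_triangular {n : ℕ} (t : Fin (n + 1) → ℂ) {T F : H →L[ℂ] H}
    (hF : IsStarProjection F) (hFT : toCalkin (F * T * (1 - F)) = 0)
    (hp : toCalkin (F * aeval T (∏ i, (X - C (t i)))) = 0) :
    ∃ Q : Fin (n + 1) → H →L[ℂ] H, OrthogonalIdempotents Q ∧ (∀ i, IsSelfAdjoint (Q i)) ∧
      ∑ i, Q i = F ∧ ∀ i j, j ≤ i → toCalkin (Q i * (T - t j • 1) * Q j) = 0 := by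
  induction n generalizing F with
  | zero =>
    refine ⟨fun _ => F, ⟨fun _ => hF.isIdempotentElem,
      Subsingleton.pairwise (α := Fin 1)⟩,
      fun _ => hF.isSelfAdjoint, Fin.sum_univ_one _, fun i j _ => ?_⟩
    rw [Fin.prod_univ_one, aeval_X_sub_C_eq] at hp
    rw [Subsingleton.elim (α := Fin 1) j 0, map_mul, hp, zero_mul]
  | succ n ih =>
    rw [Fin.prod_univ_succ, map_mul (aeval T), aeval_X_sub_C_eq] at hp
    obtain ⟨E, hE, hFE, hEF, hLE, hT', hp'⟩ := exists_projection_splitting hF hFT hp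
    obtain ⟨Q, hQ, hQsa, hQsum, hQtri⟩ :=
      ih (fun i => t i.succ) (hE.sub_of_mul_eq_right hF hFE) hT' hp'
    have hEE : E * E = E := hE.isIdempotentElem
    have hQF (i) : Q i * F = Q i := by
      have hQdiff : Q i * (F - E) = Q i := by
        rw [← hQsum, hQ.mul_sum_of_mem (Finset.mem_univ i)]
      rw [← hQdiff, mul_assoc, sub_mul, hF.isIdempotentElem.eq, hEF]
    refine ⟨Fin.cons E Q, orthogonalIdempotents_finCons hQ hE.isIdempotentElem ?_ ?_, ?_, ?_, ?_⟩
    · rw [hQsum, mul_sub, hEF, hEE, sub_self]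
    · rw [hQsum, sub_mul, hFE, hEE, sub_self]
    · exact Fin.cases hE.isSelfAdjoint hQsa
    · rw [Fin.sum_univ_succ, Fin.cons_zero]
      simp only [Fin.cons_succ, hQsum, add_sub_cancel]
    · have hfirst {B : H →L[ℂ] H} (hB : B * F = B) : toCalkin (B * (T - t 0 • 1) * E) = 0 := by
        rw [← hB, mul_assoc B, mul_assoc B, map_mul, hLE, mul_zero]
      refine Fin.cases (fun j hj => ?_) fun i => Fin.cases (fun _ => hfirst (hQF i)) fun j hij => ?_
      · rw [Fin.le_zero_iff.1 hj]
        exact hfirst hEF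
      · exact hQtri i j (Fin.succ_le_succ_iff.1 hij)

end Triangular

section FormDomination

/-- The sesquilinear form of `X` is dominated by the quadratic form of `E`; for `E = c • 1` this
means `‖X‖ ≤ c`, and unlike norm bounds such bounds can be added. -/
def FormDominated (X E : H →L[ℂ] H) : Prop :=
  ∀ u v, 2 * (⟪X u, v⟫_ℂ).re ≤ (⟪E u, u⟫_ℂ).re + (⟪E v, v⟫_ℂ).re

lemma re_inner_smul_one_self (c : ℝ) (u : H) :
    (⟪(c • (1 : H →L[ℂ] H)) u, u⟫_ℂ).re = c * ‖u‖ ^ 2 := by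
  rw [smul_apply, one_apply_eq_self, inner_smul_left_eq_smul, Complex.smul_re, smul_eq_mul]
  exact congrArg (c * ·) (inner_self_eq_norm_sq (𝕜 := ℂ) u)

namespace FormDominated

variable {X Y E F : H →L[ℂ] H}

lemma add (hX : FormDominated X E) (hY : FormDominated Y F) : FormDominated (X + Y) (E + F) := by
  intro u v
  simp only [add_apply, inner_add_left, Complex.add_re]
  linarith [hX u v, hY u v]

lemma sum {ι : Type*} {s : Finset ι} {X E : ι → H →L[ℂ] H}
    (h : ∀ i ∈ s, FormDominated (X i) (E i)) : FormDominated (∑ i ∈ s, X i) (∑ i ∈ s, E i) := by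
  intro u v
  simp only [sum_apply, sum_inner, Complex.re_sum, Finset.mul_sum, ← Finset.sum_add_distrib]
  exact Finset.sum_le_sum fun i hi => h i hi u v

lemma smul (h : FormDominated X E) {z : ℂ} {r : ℝ} (hz : ‖z‖ ≤ r) :
    FormDominated (z • X) (r • E) := by
  intro u v
  have hnonneg : 0 ≤ (⟪E u, u⟫_ℂ).re + (⟪E v, v⟫_ℂ).re := by
    have hneg := h u (-v)
    simp only [map_neg, inner_neg_left, inner_neg_right, neg_neg, Complex.neg_re] at hneg
    linarith [h u v]
  obtain ⟨w, hw, hzw⟩ := Complex.exists_norm_mul_eq_self (starRingEnd ℂ z)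
  rw [Complex.norm_conj] at hzw
  have hEw : (⟪E (w • v), w • v⟫_ℂ).re = (⟪E v, v⟫_ℂ).re := by
    have h := E.reApplyInnerSelf_smul v (c := w)
    rwa [hw, one_pow, one_mul] at h
  have hEr (x : H) : (⟪(r • E) x, x⟫_ℂ).re = r * (⟪E x, x⟫_ℂ).re := by
    rw [smul_apply, inner_smul_left_eq_smul, Complex.smul_re, smul_eq_mul]
  calc 2 * (⟪(z • X) u, v⟫_ℂ).re = ‖z‖ * (2 * (⟪X u, w • v⟫_ℂ).re) := by
        rw [smul_apply, inner_smul_left, ← hzw, mul_comm w, mul_assoc, Complex.re_ofReal_mul,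
          inner_smul_right, mul_left_comm]
    _ ≤ ‖z‖ * ((⟪E u, u⟫_ℂ).re + (⟪E v, v⟫_ℂ).re) := by
        rw [← hEw]
        exact mul_le_mul_of_nonneg_left (h u (w • v)) (norm_nonneg z)
    _ ≤ r * ((⟪E u, u⟫_ℂ).re + (⟪E v, v⟫_ℂ).re) := by gcongr
    _ = _ := by rw [hEr, hEr, mul_add]

lemma norm_le {c : ℝ} (hc : 0 ≤ c) (h : FormDominated X (c • 1)) : ‖X‖ ≤ c := by
  refine X.opNorm_le_of_unit_norm hc fun u hu => ?_
  rcases eq_or_ne (X u) 0 with hX | hX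
  · rwa [hX, norm_zero]
  set v : H := (‖X u‖⁻¹ : ℂ) • X u
  have hv : ‖v‖ = 1 := norm_smul_inv_norm hX
  have hXv : (⟪X u, v⟫_ℂ).re = ‖X u‖ := by
    have h₀ : (‖X u‖ : ℂ) ≠ 0 := Complex.ofReal_ne_zero.2 (norm_ne_zero_iff.2 hX)
    rw [inner_smul_right, inner_self_eq_norm_sq_to_K, pow_two]
    change ((‖X u‖ : ℂ)⁻¹ * ((‖X u‖ : ℂ) * ‖X u‖)).re = _
    rw [inv_mul_cancel_left₀ h₀, Complex.ofReal_re]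
  have huv := h u v
  rw [hXv, re_inner_smul_one_self, re_inner_smul_one_self, hu, hv] at huv
  linarith

lemma of_norm_le {c : ℝ} (h : ‖X‖ ≤ c) : FormDominated X (c • 1) := by
  intro u v
  rw [re_inner_smul_one_self, re_inner_smul_one_self]
  calc 2 * (⟪X u, v⟫_ℂ).re ≤ 2 * (c * ‖u‖ * ‖v‖) := by
        gcongr
        exact (re_inner_le_norm (𝕜 := ℂ) _ _).trans (by gcongr; exact X.le_of_opNorm_le h u)
    _ ≤ c * ‖u‖ ^ 2 + c * ‖v‖ ^ 2 := by
        nlinarith [mul_nonneg ((norm_nonneg X).trans h) (sq_nonneg (‖u‖ - ‖v‖))]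

variable [CompleteSpace H]

lemma conj (h : FormDominated X E) (B : H →L[ℂ] H) :
    FormDominated (star B * X * B) (star B * E * B) := by
  intro u v
  simp only [mul_apply_eq_comp, ContinuousLinearMap.star_eq_adjoint,
    ContinuousLinearMap.adjoint_inner_left]
  exact h _ _

lemma of_nonneg (hE : 0 ≤ E) : FormDominated E E := by
  intro u v
  have hpos : 0 ≤ (⟪E (u - v), u - v⟫_ℂ).re :=
    ((ContinuousLinearMap.nonneg_iff_isPositive E).1 hE).re_inner_nonneg_left _
  have hsymm : (⟪E v, u⟫_ℂ).re = (⟪E u, v⟫_ℂ).re := by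
    rw [← ContinuousLinearMap.adjoint_inner_right, ← ContinuousLinearMap.star_eq_adjoint,
      hE.star_eq]
    exact inner_re_symm (𝕜 := ℂ) _ _
  simp only [map_sub, inner_sub_left, inner_sub_right, Complex.sub_re, hsymm] at hpos
  linarith

lemma of_isSelfAdjoint (hX : IsSelfAdjoint X) : FormDominated X (CFC.abs X) := by
  rw [← CFC.posPart_add_negPart X]
  nth_rw 1 [← CFC.posPart_sub_negPart X]
  rw [sub_eq_add_neg]
  refine (of_nonneg (CFC.posPart_nonneg X)).add ?_
  simpa using (of_nonneg (CFC.negPart_nonneg X)).smul (z := -1) (r := 1) (by simp)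

lemma pinch {ι : Type*} [Fintype ι] {Q : ι → H →L[ℂ] H} (hsum : ∑ i, Q i = 1)
    (hQ : ∀ i, IsSelfAdjoint (Q i)) (h : FormDominated X E) :
    FormDominated X (Fintype.card ι • ∑ i, Q i * E * Q i) := by
  intro u v
  have hexpand (w : H) : w = ∑ i, Q i w := by
    rw [← sum_apply, hsum, one_apply_eq_self]
  have hform (w : H) : (⟪(Fintype.card ι • ∑ i, Q i * E * Q i) w, w⟫_ℂ).re =
      Fintype.card ι * ∑ i, (⟪E (Q i w), Q i w⟫_ℂ).re := by
    have hterm (i) : ⟪Q i (E (Q i w)), w⟫_ℂ = ⟪E (Q i w), Q i w⟫_ℂ := by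
      nth_rw 1 [← (hQ i).star_eq]
      exact ContinuousLinearMap.adjoint_inner_left ..
    simp only [← Nat.cast_smul_eq_nsmul ℝ, smul_apply, inner_smul_left_eq_smul, Complex.smul_re,
      smul_eq_mul, sum_apply, sum_inner, mul_apply_eq_comp, hterm, Complex.re_sum]
  rw [hform, hform]
  calc 2 * (⟪X u, v⟫_ℂ).re = ∑ i, ∑ j, 2 * (⟪X (Q i u), Q j v⟫_ℂ).re := by
        nth_rw 1 [hexpand u, hexpand v]
        simp only [map_sum, sum_inner, inner_sum, Complex.re_sum, Finset.mul_sum]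
        exact Finset.sum_comm
    _ ≤ ∑ i, ∑ j, ((⟪E (Q i u), Q i u⟫_ℂ).re + (⟪E (Q j v), Q j v⟫_ℂ).re) := by
        gcongr
        exact h _ _
    _ = _ := by
        simp only [Finset.sum_add_distrib, Finset.sum_const, Finset.card_univ, nsmul_eq_mul,
          ← Finset.mul_sum]

end FormDominated

variable [CompleteSpace H]

lemma toCalkin_abs_eq_zero {A : H →L[ℂ] H} (h : toCalkin A = 0) : toCalkin (CFC.abs A) = 0 := by
  rw [← toCalkin_star_mul_self_eq_zero_iff, (CFC.abs_nonneg A).star_eq, CFC.abs_mul_abs, map_mul, h,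
    mul_zero]

open ComplexStarModule in
lemma exists_formDominated_of_toCalkin_eq_zero {K : H →L[ℂ] H} (hK : toCalkin K = 0) :
    ∃ E, 0 ≤ E ∧ toCalkin E = 0 ∧ FormDominated K E := by
  have hre : toCalkin (ℜ K : H →L[ℂ] H) = 0 := by
    rw [realPart_apply_coe, ← Complex.coe_smul, map_smul, map_add, hK, toCalkin_star_eq_zero hK,
      add_zero, smul_zero]
  have him : toCalkin (ℑ K : H →L[ℂ] H) = 0 := by
    rw [imaginaryPart_apply_coe, ← Complex.coe_smul, map_smul, map_smul, map_sub, hK,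
      toCalkin_star_eq_zero hK, sub_zero, smul_zero, smul_zero]
  refine ⟨CFC.abs (ℜ K : H →L[ℂ] H) + CFC.abs (ℑ K : H →L[ℂ] H),
    add_nonneg (CFC.abs_nonneg _) (CFC.abs_nonneg _), ?_, ?_⟩
  · rw [map_add, toCalkin_abs_eq_zero hre, toCalkin_abs_eq_zero him, add_zero]
  · have hdom := (FormDominated.of_isSelfAdjoint (ℜ K).2).add
      ((FormDominated.of_isSelfAdjoint (ℑ K).2).smul Complex.norm_I.le)
    rwa [realPart_add_I_smul_imaginaryPart, one_smul] at hdom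

lemma exists_formDominated_commute {ι : Type*} [Fintype ι] {Q : ι → H →L[ℂ] H}
    (hQ : CompleteOrthogonalIdempotents Q) (hQsa : ∀ i, IsSelfAdjoint (Q i)) {K : H →L[ℂ] H}
    (hK : toCalkin K = 0) :
    ∃ E, 0 ≤ E ∧ toCalkin E = 0 ∧ FormDominated K E ∧ ∀ i, Commute E (Q i) := by
  classical
  obtain ⟨E, hE, hE₀, hKE⟩ := exists_formDominated_of_toCalkin_eq_zero hK
  refine ⟨_, ?_, ?_, hKE.pinch hQ.complete hQsa, fun i => ?_⟩
  · refine nsmul_nonneg (Finset.sum_nonneg fun i _ => ?_) _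
    simpa only [(hQsa i).star_eq] using star_left_conjugate_nonneg hE (Q i)
  · simp only [map_nsmul, map_sum, map_mul, hE₀, mul_zero, zero_mul, Finset.sum_const_zero,
      smul_zero]
  · refine Commute.smul_left ?_ _
    simp only [Commute, SemiconjBy, Finset.sum_mul, Finset.mul_sum, mul_assoc, hQ.mul_eq]
    simp only [← mul_assoc, hQ.mul_eq]
    simp

end FormDomination

section Damping

variable [CompleteSpace H]

lemma exists_damping {E : H →L[ℂ] H} (hE : 0 ≤ E) (hE₀ : toCalkin E = 0) {δ : ℝ} (hδ : 0 < δ) :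
    ∃ A B : H →L[ℂ] H, IsSelfAdjoint A ∧ IsSelfAdjoint B ∧ toCalkin A = 1 ∧
      A * A + B * B = 1 ∧ A * A * E = δ • (B * B) ∧
      ∀ C, Commute E C → Commute A C ∧ Commute B C := by
  set d : ℝ → ℝ := fun x => δ + max x 0
  have hd (x : ℝ) : 0 < d x := add_pos_of_pos_of_nonneg hδ (le_max_right _ _)
  have hdcont : Continuous d := by fun_prop
  have hα : Continuous fun x => δ / d x := continuous_const.div hdcont fun x => (hd x).ne'
  have hβ : Continuous fun x => max x 0 / d x :=
    (continuous_id.max continuous_const).div hdcont fun x => (hd x).ne'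
  have hEsa : IsSelfAdjoint E := .of_nonneg hE
  have hsq {γ : ℝ → ℝ} (hγ : Continuous γ) (hγ₀ : ∀ x, 0 ≤ γ x) :
      cfc (fun x => √(γ x)) E * cfc (fun x => √(γ x)) E = cfc γ E := by
    rw [← cfc_mul _ _ E hγ.sqrt.continuousOn hγ.sqrt.continuousOn]
    exact cfc_congr fun x _ => Real.mul_self_sqrt (hγ₀ x)
  refine ⟨cfc (fun x => √(δ / d x)) E, cfc (fun x => √(max x 0 / d x)) E, .cfc, .cfc,
    toCalkin_cfc_of_toCalkin_eq_zero hEsa hE₀ hα.sqrt (by simp [d, hδ.ne']), ?_, ?_,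
    fun C hC => ⟨hC.cfc_real _, hC.cfc_real _⟩⟩
  all_goals rw [hsq hα fun x => div_nonneg hδ.le (hd x).le,
    hsq hβ fun x => div_nonneg (le_max_right _ _) (hd x).le]
  · rw [← cfc_add E _ _ hα.continuousOn hβ.continuousOn, ← cfc_const_one ℝ E]
    exact cfc_congr fun x _ => by rw [← add_div, div_self (hd x).ne']
  · nth_rw 2 [← cfc_id ℝ E]
    rw [← cfc_mul _ _ E hα.continuousOn continuous_id.continuousOn,
      ← cfc_const_mul δ _ E hβ.continuousOn]
    refine cfc_congr fun x hx => ?_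
    simp only [max_eq_left (spectrum_nonneg_of_nonneg hE hx), id]
    ring

end Damping

section NormCorrection

lemma sum_smul_mul_of_mem {R A ι : Type*} [CommSemiring R] [Semiring A] [Algebra R A] {e : ι → A}
    (he : OrthogonalIdempotents e) (a : ι → R) {s : Finset ι} {j : ι} (hj : j ∈ s) :
    (∑ i ∈ s, a i • e i) * e j = a j • e j := by
  classical
  simp only [Finset.sum_mul, smul_mul_assoc, he.mul_eq, smul_ite, smul_zero,
    Finset.sum_ite_eq_of_mem' _ _ _ hj]

lemma sum_mul_of_mem {A ι : Type*} [Semiring A] {e : ι → A} (he : OrthogonalIdempotents e)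
    {s : Finset ι} {j : ι} (hj : j ∈ s) : (∑ i ∈ s, e i) * e j = e j := by
  simpa only [Pi.one_apply, one_smul] using sum_smul_mul_of_mem he (1 : ι → ℕ) hj

lemma mul_sum_blocks_mul {A ι : Type*} [Semiring A] [Fintype ι] {e : ι → A}
    (he : OrthogonalIdempotents e) (N : ι → ι → A) (i j : ι) :
    e i * (∑ k, ∑ l, e k * N k l * e l) * e j = e i * N i j * e j := by
  classical
  simp only [Finset.mul_sum, Finset.sum_mul, mul_assoc, he.mul_eq, mul_ite, mul_zero]
  simp only [← mul_assoc, he.mul_eq, ite_mul, zero_mul, Finset.sum_ite_eq', Finset.sum_ite_eq,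
    Finset.mem_univ, if_true]

variable [CompleteSpace H]

-- For `L = T - t`, expanding `0 ≤ |t|² - T*T` and compressing to `Q` bounds `QL*LQ` by the compact
-- operator `-2 Re (t (QLQ)*)`.
lemma toCalkin_sub_smul_mul_eq_zero {T Q : H →L[ℂ] H} {t : ℂ} (hQ : IsStarProjection Q)
    (hT : ‖T‖ ≤ ‖t‖) (h : toCalkin (Q * (T - t • 1) * Q) = 0) :
    toCalkin ((T - t • 1) * Q) = 0 := by
  set L := T - t • 1
  have hdefect : 0 ≤ (‖t‖ ^ 2) • (1 : H →L[ℂ] H) - star T * T := by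
    have hle := CStarAlgebra.star_mul_le_algebraMap_norm_sq (a := T)
    rw [sub_nonneg, ← Algebra.algebraMap_eq_smul_one]
    exact hle.trans (algebraMap_mono _ (by gcongr))
  have hdefect_eq : (‖t‖ ^ 2) • (1 : H →L[ℂ] H) - star T * T =
      -(star L * L) - t • star L - starRingEnd ℂ t • L := by
    have hT' : T = L + t • 1 := (sub_add_cancel _ _).symm
    have ht : (‖t‖ ^ 2) • (1 : H →L[ℂ] H) = (starRingEnd ℂ t * t) • 1 := by
      rw [Complex.conj_mul', ← Complex.ofReal_pow, Complex.coe_smul]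
    rw [ht, hT', star_add, star_smul, star_one, add_mul, mul_add, mul_add, smul_mul_smul_comm,
      mul_smul_comm, smul_mul_assoc, mul_one, mul_one, one_mul]
    rw [starRingEnd_apply]
    abel
  refine toCalkin_eq_zero_of_star_mul_self_le
    (N := -(t • star (Q * L * Q)) - starRingEnd ℂ t • (Q * L * Q)) ?_ ?_
  · have hconj := star_left_conjugate_nonneg hdefect Q
    rw [hdefect_eq, hQ.isSelfAdjoint.star_eq] at hconj
    rw [← sub_nonneg]
    convert hconj using 1
    simp only [star_mul, hQ.isSelfAdjoint.star_eq, mul_sub, sub_mul, mul_neg, neg_mul, mul_assoc,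
      mul_smul_comm, smul_mul_assoc]
    abel
  · rw [map_sub, map_neg, map_smul, map_smul, toCalkin_star_eq_zero h, h, smul_zero, smul_zero,
      neg_zero, sub_zero]

lemma toCalkin_mul_sub_smul_eq_zero {T Q : H →L[ℂ] H} {t : ℂ} (hQ : IsStarProjection Q)
    (hT : ‖T‖ ≤ ‖t‖) (h : toCalkin (Q * (T - t • 1) * Q) = 0) :
    toCalkin (Q * (T - t • 1)) = 0 := by
  have hstar {Y : H →L[ℂ] H} : star (Y - t • 1) = star Y - star t • 1 := by
    rw [star_sub, star_smul, star_one]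
  have hadj : toCalkin ((star T - star t • 1) * Q) = 0 := by
    refine toCalkin_sub_smul_mul_eq_zero hQ (by simpa using hT) ?_
    rw [← hstar, mul_assoc]
    simpa only [star_mul, hQ.isSelfAdjoint.star_eq] using toCalkin_star_eq_zero h
  rw [← hstar] at hadj
  simpa only [star_mul, star_star, hQ.isSelfAdjoint.star_eq] using toCalkin_star_eq_zero hadj

lemma toCalkin_block_eq_zero_of_norm_le {ι : Type*} {Q : ι → H →L[ℂ] H}
    (hQ : OrthogonalIdempotents Q) (hQsa : ∀ i, IsSelfAdjoint (Q i)) {T : H →L[ℂ] H} {t : ι → ℂ}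
    (hdiag : ∀ i, toCalkin (Q i * (T - t i • 1) * Q i) = 0) {i j : ι} (hij : i ≠ j)
    (hT : ‖T‖ ≤ ‖t i‖ ∨ ‖T‖ ≤ ‖t j‖) : toCalkin (Q i * (T - t j • 1) * Q j) = 0 := by
  have hproj (k) : IsStarProjection (Q k) := ⟨hQ.idem k, hQsa k⟩
  rcases hT with hi | hj
  · have hshift : Q i * (T - t j • 1) * Q j = Q i * (T - t i • 1) * Q j := by
      simp only [mul_sub, sub_mul, mul_smul_comm, smul_mul_assoc, mul_one, hQ.ortho hij, smul_zero]
    rw [hshift, map_mul, toCalkin_mul_sub_smul_eq_zero (hproj i) hi (hdiag i), zero_mul]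
  · rw [mul_assoc, map_mul, toCalkin_sub_smul_mul_eq_zero (hproj j) hj (hdiag j), mul_zero]

lemma exists_strictly_triangular {ι : Type*} [Fintype ι] [LinearOrder ι] {Q : ι → H →L[ℂ] H}
    (hQ : CompleteOrthogonalIdempotents Q) (hQsa : ∀ i, IsSelfAdjoint (Q i)) {T : H →L[ℂ] H}
    {t : ι → ℂ} (htri : ∀ i j, j ≤ i → toCalkin (Q i * (T - t j • 1) * Q j) = 0)
    {s : Finset ι} (hs : ∀ i ∉ s, ‖T‖ ≤ ‖t i‖) :
    ∃ U : H →L[ℂ] H, toCalkin (∑ i, t i • Q i + U) = toCalkin T ∧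
      (∑ i ∈ s, Q i) * U = U ∧ U * ∑ i ∈ s, Q i = U ∧ ∀ i j, j ≤ i → Q i * U * Q j = 0 := by
  have hblock {i j} (hij : ¬ (i ∈ s ∧ j ∈ s ∧ i < j)) :
      toCalkin (Q i * (T - t j • 1) * Q j) = 0 := by
    rcases le_or_gt j i with hji | hlt
    · exact htri i j hji
    · have hout : i ∉ s ∨ j ∉ s := by tauto
      exact toCalkin_block_eq_zero_of_norm_le hQ.toOrthogonalIdempotents hQsa
        (fun k => htri k k le_rfl) hlt.ne (hout.imp (hs i) (hs j))
  have hexpand : T - ∑ i, t i • Q i = ∑ i, ∑ j, Q i * (T - t j • 1) * Q j := by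
    rw [Finset.sum_comm]
    simp only [mul_assoc, ← Finset.sum_mul, hQ.complete, one_mul]
    simp only [sub_mul, smul_mul_assoc, one_mul, Finset.sum_sub_distrib, ← Finset.mul_sum,
      hQ.complete, mul_one]
  let N (i j : ι) : H →L[ℂ] H := if i ∈ s ∧ j ∈ s ∧ i < j then T - t j • 1 else 0
  refine ⟨∑ i, ∑ j, Q i * N i j * Q j, ?_, ?_, ?_, fun i j hji => ?_⟩
  · rw [← sub_eq_zero, ← map_sub, ← neg_sub, map_neg, neg_eq_zero, ← sub_sub, hexpand]
    simp only [← Finset.sum_sub_distrib, map_sum]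
    refine Finset.sum_eq_zero fun i _ => Finset.sum_eq_zero fun j _ => ?_
    by_cases hij : i ∈ s ∧ j ∈ s ∧ i < j
    · simp only [N, if_pos hij, sub_self, map_zero]
    · simp only [N, if_neg hij, mul_zero, zero_mul, sub_zero, hblock hij]
  · simp only [Finset.mul_sum, ← mul_assoc]
    refine Finset.sum_congr rfl fun i _ => Finset.sum_congr rfl fun j _ => ?_
    by_cases hi : i ∈ s
    · rw [sum_mul_of_mem hQ.toOrthogonalIdempotents hi]
    · simp only [N, hi, false_and, if_false, mul_zero, zero_mul]
  · simp only [Finset.sum_mul, mul_assoc]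
    refine Finset.sum_congr rfl fun i _ => Finset.sum_congr rfl fun j _ => ?_
    by_cases hj : j ∈ s
    · rw [hQ.mul_sum_of_mem hj]
    · simp only [N, hj, false_and, and_false, if_false, mul_zero, zero_mul]
  · rw [mul_sum_blocks_mul hQ.toOrthogonalIdempotents]
    simp only [N, hji.not_gt, and_false, if_false, mul_zero, zero_mul]

-- Conjugating by `A` damps the excess `E`: because `A²E = δB²`, the three dominating operators
-- `c(1 - G)`, `(c - δ)GB²` and `G(cA² + A²E)` add up to exactly `c`.
theorem norm_add_damped_le {D₁ D₂ U T E G A B : H →L[ℂ] H} {c δ : ℝ} (hc : 0 ≤ c)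
    (hD₁ : FormDominated D₁ (c • (1 - G))) (hD₂ : FormDominated D₂ ((c - δ) • G))
    (hT : FormDominated T (c • 1 + E)) (hG : IsStarProjection G) (hGT : G * T * G = D₂ + U)
    (hA : IsSelfAdjoint A) (hB : IsSelfAdjoint B) (hAG : Commute A G) (hBG : Commute B G)
    (hAE : Commute A E) (hAD : Commute A D₂) (hBD : Commute B D₂)
    (hAB : A * A + B * B = 1) (hAAE : A * A * E = δ • (B * B)) :
    ‖D₁ + D₂ + A * U * A‖ ≤ c := by
  have hGG : G * G = G := hG.isIdempotentElem
  refine FormDominated.norm_le hc ?_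
  have hX : D₁ + D₂ + A * U * A = D₁ + star B * D₂ * B + star (G * A) * T * (G * A) := by
    calc D₁ + D₂ + A * U * A = D₁ + D₂ * (A * A + B * B) + A * U * A := by rw [hAB, mul_one]
      _ = D₁ + D₂ * B * B + (D₂ * A * A + A * U * A) := by noncomm_ring
      _ = D₁ + B * D₂ * B + A * (G * T * G) * A := by rw [← hAD.eq, ← hBD.eq, hGT]; noncomm_ring
      _ = _ := by
        rw [star_mul, hA.star_eq, hB.star_eq, hG.isSelfAdjoint.star_eq]
        noncomm_ring
  have hdom : c • 1 = c • (1 - G) + star B * ((c - δ) • G) * B +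
      star (G * A) * (c • 1 + E) * (G * A) := by
    have hBGB : B * G * B = G * (B * B) := by rw [hBG.eq, mul_assoc]
    have hAGA : A * G * (G * A) = G * (A * A) := by
      rw [← mul_assoc, mul_assoc A, hGG, hAG.eq, mul_assoc]
    have hAGEGA : A * G * E * (G * A) = δ • (G * (B * B)) := by
      calc A * G * E * (G * A) = G * A * E * (A * G) := by rw [hAG.eq]
        _ = G * (A * A * E) * G := by rw [mul_assoc A A, hAE.eq]; noncomm_ring
        _ = _ := by
          rw [hAAE, mul_smul_comm, smul_mul_assoc, mul_assoc, (hBG.mul_left hBG).eq, ← mul_assoc,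
            hGG]
    rw [star_mul, hA.star_eq, hB.star_eq, hG.isSelfAdjoint.star_eq, mul_smul_comm, smul_mul_assoc,
      hBGB, mul_add, add_mul, mul_smul_comm, mul_one, smul_mul_assoc, hAGA, hAGEGA]
    have hGAA : G * (A * A) = G - G * (B * B) := by
      rw [eq_sub_iff_add_eq, ← mul_add, hAB, mul_one]
    rw [hGAA]
    module
  rw [hX, hdom]
  exact (hD₁.add (hD₂.conj B)).add (hT.conj (G * A))

lemma exists_pos_forall_le_sub {ι : Type*} {s : Finset ι} {f : ι → ℝ} {c : ℝ}
    (h : ∀ i ∈ s, f i < c) : ∃ δ > 0, ∀ i ∈ s, f i ≤ c - δ := by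
  rcases s.eq_empty_or_nonempty with rfl | hne
  · exact ⟨1, one_pos, by simp⟩
  · obtain ⟨k, hk, hmax⟩ := s.exists_max_image f hne
    exact ⟨c - f k, sub_pos.2 (h k hk), fun i hi => by simpa using hmax i hi⟩

theorem exists_norm_damped_le {ι : Type*} [Fintype ι] {Q : ι → H →L[ℂ] H}
    (hQ : CompleteOrthogonalIdempotents Q) (hQsa : ∀ i, IsSelfAdjoint (Q i)) {T U : H →L[ℂ] H}
    {t : ι → ℂ} (hTU : toCalkin (∑ i, t i • Q i + U) = toCalkin T) {c : ℝ} (hT : ‖T‖ ≤ c)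
    (ht : ∀ i, ‖t i‖ ≤ c) {s : Finset ι} (hs : ∀ i ∈ s, ‖t i‖ < c)
    (hGU : (∑ i ∈ s, Q i) * U = U) (hUG : U * ∑ i ∈ s, Q i = U) :
    ∃ A : H →L[ℂ] H, toCalkin A = 1 ∧ (∀ i, Commute A (Q i)) ∧
      ‖∑ i, t i • Q i + A * U * A‖ ≤ c := by
  classical
  set G := ∑ i ∈ s, Q i with hGdef
  have hpos (i) : 0 ≤ Q i := IsStarProjection.nonneg ⟨hQ.idem i, hQsa i⟩
  obtain ⟨E, hE, hE₀, hdom, hEQ⟩ := exists_formDominated_commute hQ hQsa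
    (K := ∑ i, t i • Q i + U - T) (by rw [map_sub, hTU, sub_self])
  obtain ⟨δ, hδ, hsδ⟩ := exists_pos_forall_le_sub hs
  obtain ⟨A, B, hA, hB, hA₁, hAB, hAAE, hcomm⟩ := exists_damping hE hE₀ hδ
  have hAQ (i) : Commute A (Q i) := (hcomm _ (hEQ i)).1
  have hBQ (i) : Commute B (Q i) := (hcomm _ (hEQ i)).2
  refine ⟨A, hA₁, hAQ, ?_⟩
  have hsplit : 1 - G = ∑ i ∈ sᶜ, Q i := by
    rw [← hQ.complete, ← Finset.sum_compl_add_sum s, add_sub_cancel_right]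
  rw [← Finset.sum_compl_add_sum s fun i => t i • Q i]
  refine norm_add_damped_le (G := G) ((norm_nonneg T).trans hT) ?_ ?_
    (by simpa using (FormDominated.of_norm_le hT).add hdom) ?_ ?_ hA hB
    (.sum_right s Q A fun i _ => hAQ i) (.sum_right s Q B fun i _ => hBQ i)
    (hcomm E (.refl E)).1 (.sum_right _ _ _ fun i _ => (hAQ i).smul_right _)
    (.sum_right _ _ _ fun i _ => (hBQ i).smul_right _) hAB hAAE
  · rw [hsplit, Finset.smul_sum]
    exact .sum fun i _ => (FormDominated.of_nonneg (hpos i)).smul (ht i)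
  · rw [hGdef, Finset.smul_sum]
    exact .sum fun i hi => (FormDominated.of_nonneg (hpos i)).smul (hsδ i hi)
  · exact ⟨hQ.isIdempotentElem_sum, isSelfAdjoint_sum s fun i _ => hQsa i⟩
  · have hDG : (∑ i, t i • Q i) * G = ∑ i ∈ s, t i • Q i := by
      simp only [hGdef, Finset.mul_sum, sum_smul_mul_of_mem hQ.toOrthogonalIdempotents t
        (Finset.mem_univ _)]
    rw [mul_add, add_mul, hGU, hUG, add_left_inj, mul_assoc, hDG, Finset.mul_sum]
    exact Finset.sum_congr rfl fun i hi => by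
      rw [mul_smul_comm, sum_mul_of_mem hQ.toOrthogonalIdempotents hi]

theorem exists_triangular_norm_le {ι : Type*} [Fintype ι] [LinearOrder ι] {Q : ι → H →L[ℂ] H}
    (hQ : CompleteOrthogonalIdempotents Q) (hQsa : ∀ i, IsSelfAdjoint (Q i)) {T : H →L[ℂ] H}
    {t : ι → ℂ} (ht : ∀ i, ‖t i‖ ≤ ‖T‖)
    (htri : ∀ i j, j ≤ i → toCalkin (Q i * (T - t j • 1) * Q j) = 0) :
    ∃ X : H →L[ℂ] H, toCalkin X = toCalkin T ∧ ‖X‖ ≤ ‖T‖ ∧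
      ∀ i j, j ≤ i → Q i * (X - t j • 1) * Q j = 0 := by
  classical
  obtain ⟨U, hTU, hGU, hUG, hU⟩ := exists_strictly_triangular hQ hQsa htri
    (s := {i | ‖t i‖ < ‖T‖}) (by simp)
  obtain ⟨A, hA, hAQ, hnorm⟩ := exists_norm_damped_le hQ hQsa hTU le_rfl ht (by simp) hGU hUG
  refine ⟨_, ?_, hnorm, fun i j hji => ?_⟩
  · rw [← hTU]
    simp only [map_add, map_mul, hA, one_mul, mul_one]
  · have hdiag : (∑ i, t i • Q i) * Q j = t j • Q j :=
      sum_smul_mul_of_mem hQ.toOrthogonalIdempotents t (Finset.mem_univ j)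
    calc Q i * (∑ i, t i • Q i + A * U * A - t j • 1) * Q j
        = Q i * ((∑ i, t i • Q i) * Q j - t j • Q j) + (Q i * A) * U * (A * Q j) := by
          rw [← one_mul (Q j), ← smul_mul_assoc, one_mul]
          noncomm_ring
      _ = A * (Q i * U * Q j) * A := by
          rw [hdiag, sub_self, ← (hAQ i).eq, (hAQ j).eq]
          noncomm_ring
      _ = 0 := by rw [hU i j hji, mul_zero, zero_mul]

end NormCorrection

section MinimalPolynomial

lemma mem_spectrum_of_isRoot_minpoly {K A : Type*} [Field K] [Ring A] [Algebra K A] {x : A}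
    (hx : IsIntegral K x) {r : K} (hr : (minpoly K x).IsRoot r) : r ∈ spectrum K x := by
  obtain ⟨q, hq⟩ := dvd_iff_isRoot.2 hr
  intro hunit
  have hq₀ : q ≠ 0 := by
    rintro rfl
    exact minpoly.ne_zero hx (by rw [hq, mul_zero])
  have hxq : (algebraMap K A r - x) * aeval x q = 0 := by
    have h := minpoly.aeval K x
    rwa [hq, map_mul, map_sub, aeval_X, aeval_C, ← neg_sub, neg_mul, neg_eq_zero] at h
  have hdeg := natDegree_le_of_dvd (minpoly.dvd K x (hunit.mul_right_eq_zero.1 hxq)) hq₀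
  rw [hq, natDegree_mul (X_sub_C_ne_zero r) hq₀, natDegree_X_sub_C] at hdeg
  omega

lemma exists_eq_prod_X_sub_C {K : Type*} [Field K] {p : K[X]} (hsplits : p.Splits) (hp : p.Monic)
    (hdeg : 0 < p.natDegree) : ∃ (n : ℕ) (t : Fin (n + 1) → K), p = ∏ i, (X - C (t i)) := by
  obtain ⟨n, hn⟩ := Nat.exists_eq_succ_of_ne_zero hdeg.ne'
  have hlen : n + 1 = p.roots.toList.length := by
    rw [Multiset.length_toList, ← hsplits.natDegree_eq_card_roots, hn]
  refine ⟨n, fun i => p.roots.toList.get (i.cast hlen), ?_⟩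
  calc p = (p.roots.toList.map (X - C ·)).prod := by
        rw [← Multiset.prod_coe, ← Multiset.map_coe, Multiset.coe_toList]
        exact hsplits.eq_prod_roots_of_monic hp
    _ = ∏ i, (X - C (p.roots.toList.get i)) := by
        rw [← List.prod_ofFn, List.ofFn_comp' _ (X - C ·), List.ofFn_get]
    _ = _ := (Fintype.prod_equiv (finCongr hlen) _ _ fun _ => rfl).symm

lemma norm_le_of_isRoot_minpoly [CompleteSpace H] {S : H →L[ℂ] H}
    (hS : IsIntegral ℂ (toCalkin S)) {r : ℂ} (hr : (minpoly ℂ (toCalkin S)).IsRoot r) :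
    ‖r‖ ≤ ‖S‖ :=
  norm_le_norm_of_mem_spectrum
    (AlgHom.spectrum_apply_subset toCalkin S (mem_spectrum_of_isRoot_minpoly hS hr))

lemma aeval_prod_X_sub_C_eq_prod_ofFn {R A : Type*} [CommRing R] [Ring A] [Algebra R A] (x : A)
    {n : ℕ} (t : Fin n → R) :
    aeval x (∏ i, (X - C (t i))) = (List.ofFn fun i => x - t i • 1).prod := by
  rw [← List.prod_ofFn, map_list_prod, List.map_ofFn]
  congr 2
  exact funext fun i => aeval_X_sub_C_eq x (t i)

theorem exists_aeval_minpoly_eq_zero [CompleteSpace H] (hdim : ¬ FiniteDimensional ℂ H)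
    {T : H →L[ℂ] H} (hT : IsIntegral ℂ (toCalkin T)) :
    ∃ X, toCalkin X = toCalkin T ∧ aeval X (minpoly ℂ (toCalkin T)) = 0 ∧ ‖X‖ = essNorm T := by
  have := nontrivial_calkin hdim
  obtain ⟨S, hST, hS⟩ := exists_norm_eq_essNorm T
  rw [← hST] at hT ⊢
  obtain ⟨n, t, ht⟩ := exists_eq_prod_X_sub_C (IsAlgClosed.splits _) (minpoly.monic hT)
    (minpoly.natDegree_pos hT)
  have hroot (i) : (minpoly ℂ (toCalkin S)).IsRoot (t i) := by
    rw [ht]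
    exact dvd_iff_isRoot.1 (Finset.dvd_prod_of_mem _ (Finset.mem_univ i))
  have hcompact : toCalkin (1 * aeval S (∏ i, (X - C (t i)))) = 0 := by
    rw [one_mul, ← ht, ← aeval_algHom_apply, minpoly.aeval]
  obtain ⟨Q, hQ, hQsa, hQsum, htri⟩ :=
    exists_essentially_triangular t (.one _) (by rw [sub_self, mul_zero, map_zero]) hcompact
  obtain ⟨X, hXS, hXnorm, hX⟩ := exists_triangular_norm_le ⟨hQ, hQsum⟩ hQsa
    (fun i => norm_le_of_isRoot_minpoly hT (hroot i)) htri
  refine ⟨X, hXS, ?_, (hXnorm.trans_eq hS).antisymm (essNorm_le_norm (hXS.trans hST))⟩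
  rw [ht]
  exact aeval_prod_eq_zero_of_triangular ⟨hQ, hQsum⟩ hX

end MinimalPolynomial

end PolynomiallyCompact

open PolynomiallyCompact in
theorem stmt_10_general {H : Type*} [NormedAddCommGroup H] [InnerProductSpace ℂ H]
    [CompleteSpace H] (hdim : ¬ FiniteDimensional ℂ H) (T : H →L[ℂ] H) (p : ℂ[X])
    (hp : IsCompactOperator (aeval T p)) :
    ∃ K : H →L[ℂ] H, IsCompactOperator K ∧ aeval (T + K) p = 0 ∧
      ‖T + K‖ = Metric.infDist T {S : H →L[ℂ] H | IsCompactOperator S} := by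
  suffices h : ∃ X, toCalkin X = toCalkin T ∧ aeval X p = 0 ∧ ‖X‖ = essNorm T by
    obtain ⟨X, hXT, hX⟩ := h
    exact ⟨X - T, toCalkin_eq_iff.1 hXT, by rwa [add_sub_cancel]⟩
  have hroot : aeval (toCalkin T) p = 0 := by
    rw [aeval_algHom_apply, toCalkin_eq_zero_iff.2 hp]
  rcases eq_or_ne p 0 with rfl | hp₀
  · obtain ⟨X, hXT, hX⟩ := exists_norm_eq_essNorm T
    exact ⟨X, hXT, map_zero _, hX⟩
  · obtain ⟨X, hXT, hXroot, hX⟩ :=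
      exists_aeval_minpoly_eq_zero hdim (IsAlgebraic.isIntegral ⟨p, hp₀, hroot⟩)
    obtain ⟨q, hq⟩ := minpoly.dvd ℂ (toCalkin T) hroot
    exact ⟨X, hXT, by rw [hq, map_mul, hXroot, zero_mul], hX⟩

/-- Let `H` be an infinite-dimensional separable complex Hilbert space,
`T ∈ B(H)`, and `p(t) = (t−t₁)⋯(t−tₙ)` with distinct real roots. If `p(T)` is compact,
then there is a compact operator `K` with `p(T + K) = 0` and `‖T + K‖ = ‖T‖ₑ`, the
essential norm of `T` (the norm of the image of `T` in the Calkin algebra, i.e. the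
distance from `T` to the compact operators). -/
theorem stmt_10 {H : Type*} [NormedAddCommGroup H] [InnerProductSpace ℂ H] [CompleteSpace H]
    [TopologicalSpace.SeparableSpace H] (hdim : ¬ FiniteDimensional ℂ H)
    (n : ℕ) (t : Fin n → ℝ) (ht : Function.Injective t)
    (T : H →L[ℂ] H)
    (hTc : IsCompactOperator (List.ofFn fun i => T - (t i : ℂ) • 1).prod) :
    ∃ K : H →L[ℂ] H, IsCompactOperator K ∧
      (List.ofFn fun i => T + K - (t i : ℂ) • 1).prod = 0 ∧
      ‖T + K‖ = Metric.infDist T {S : H →L[ℂ] H | IsCompactOperator S} := by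
  simp only [← PolynomiallyCompact.aeval_prod_X_sub_C_eq_prod_ofFn] at hTc ⊢
  exact stmt_10_general hdim T _ hTc
end

section
/- Let A be a unital C*-algebra, I a closed two-sided ideal of A with quotient map q : A → A/I, let S ∈ A be positive and invertible with image s = q(S), let C ≥ 0, and let y ∈ A/I be self-adjoint with ‖s^{−1/2} y s^{1/2}‖ ≤ C. Then there exists a self-adjoint element Y ∈ A with q(Y) = y and ‖S^{−1/2} Y S^{1/2}‖ ≤ C. -/
/-!
Put `u = S^{1/2}` and `s = u u⋆`. For self-adjoint `Y`, the bound `‖u⁻¹ Y u‖ ≤ C` is the order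
inequality `Y s Y ≤ C² s`. A self-adjoint lift `b` of `y` satisfies it up to the ideal:
`b s b ≤ C² s + k`, where `k` is the positive part of `b s b - C² s`, so `0 ≤ k ∈ I`.
Suppose `0 ≤ m ∈ I` solves the Lyapunov inequality `C⁻² k ≤ s m + m s`. Then
`s + C⁻² k ≤ (1 + m) s (1 + m)`, so that `x = (1 + m)⁻¹`, which is `1` modulo `I`, satisfies
`x (s + C⁻² k) x ≤ s`, and `Y = x b x` is the required lift:
`Y s Y = x b (x s x) b x ≤ x (b s b) x ≤ x (C² s + k) x ≤ C² s`.
With `v = 1 - r s` and `r > 0` chosen so that `‖v‖ < 1`, the fixed point of the contraction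
`m ↦ r h + v m v` of the positive cone of `I` solves `h ≤ s m + m s` for `0 ≤ h ∈ I`, because
`m - v m v = r (s m + m s) - r² s m s`.
-/

open scoped ComplexStarModule

section StarOrderedRing

variable {R : Type*} [Ring R] [PartialOrder R] [StarRing R] [StarOrderedRing R]

lemma add_le_one_add_mul_mul_one_add {s m k : R} (hs : 0 ≤ s) (hm : IsSelfAdjoint m)
    (hk : k ≤ s * m + m * s) : s + k ≤ (1 + m) * s * (1 + m) :=
  calc s + k ≤ s + (s * m + m * s) + m * s * m :=
        le_add_of_le_of_nonneg (by gcongr) (hm.conjugate_nonneg hs)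
    _ = (1 + m) * s * (1 + m) := by noncomm_ring

lemma inv_mul_mul_star_inv_le_iff {u : Rˣ} {a b : R} :
    ↑u⁻¹ * a * star (u⁻¹ : Rˣ).val ≤ b ↔ a ≤ u * b * star u.val := by
  rw [← sub_nonneg, ← sub_nonneg (b := a), ← u.isUnit.star_right_conjugate_nonneg_iff, mul_sub,
    sub_mul]
  simp [mul_assoc, ← star_mul]

end StarOrderedRing

section CStarAlgebra

variable {A : Type*} [CStarAlgebra A] [PartialOrder A] [StarOrderedRing A]

lemma norm_inv_mul_mul_le_iff {u : Aˣ} {y : A} (hy : IsSelfAdjoint y) {C : ℝ} (hC : 0 ≤ C) :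
    ‖↑u⁻¹ * y * u‖ ≤ C ↔ y * (u * star u.val) * y ≤ C ^ 2 • (u * star u.val) := by
  set t : A := ↑u⁻¹ * y * u with ht
  have ht_mul : t * star t = ↑u⁻¹ * (y * (u * star u.val) * y) * star (u⁻¹ : Aˣ).val := by
    simp only [ht, star_mul, hy.star_eq, mul_assoc]
  rw [← sq_le_sq₀ (norm_nonneg t) hC, sq ‖t‖, ← CStarRing.norm_self_mul_star,
    CStarAlgebra.norm_le_iff_le_algebraMap _ (sq_nonneg C) (mul_star_self_nonneg t), ht_mul,
    inv_mul_mul_star_inv_le_iff, Algebra.algebraMap_eq_smul_one, mul_smul_comm, mul_one,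
    smul_mul_assoc]

lemma exists_pos_norm_one_sub_smul_lt_one {s : A} (hs : IsStrictlyPositive s) :
    ∃ r : ℝ, 0 < r ∧ ‖1 - r • s‖ < 1 := by
  obtain _ | _ := subsingleton_or_nontrivial A
  · exact ⟨1, one_pos, by simp [Subsingleton.elim _ (0 : A)]⟩
  obtain ⟨δ, hδ, hδs⟩ := (CFC.exists_pos_algebraMap_le_iff hs.isSelfAdjoint).mpr
    fun _ hx => hs.spectrum_pos hx
  let r : ℝ := (max δ ‖s‖)⁻¹
  have hr0 : 0 < r := inv_pos.mpr (lt_max_of_lt_left hδ)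
  have hrδ : r * δ ≤ 1 := inv_mul_le_one_of_le₀ (le_max_left _ _) (by positivity)
  have hrs : r * ‖s‖ ≤ 1 := inv_mul_le_one_of_le₀ (le_max_right _ _) (by positivity)
  have h_nonneg : 0 ≤ 1 - r • s := by
    rw [sub_nonneg]
    exact (CStarAlgebra.norm_le_one_iff_of_nonneg _ (smul_nonneg hr0.le hs.nonneg)).mp
      (by rwa [norm_smul, Real.norm_of_nonneg hr0.le])
  have h_le : 1 - r • s ≤ algebraMap ℝ A (1 - r * δ) := by
    rw [map_sub, map_one, map_mul, ← Algebra.smul_def]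
    gcongr
  refine ⟨r, hr0, ?_⟩
  calc ‖1 - r • s‖ ≤ 1 - r * δ :=
        (CStarAlgebra.norm_le_iff_le_algebraMap _ (by linarith) h_nonneg).mpr h_le
    _ < 1 := sub_lt_self _ (by positivity)

variable {I : Ideal A} [I.IsTwoSided]

lemma exists_nonneg_mem_sub_star_mul_mul_eq (hI : IsClosed (I : Set A)) {v k : A} (hv : ‖v‖ < 1)
    (hk : 0 ≤ k) (hkI : k ∈ I) : ∃ m ∈ I, 0 ≤ m ∧ m - star v * m * v = k := by
  let f : A → A := fun m => k + star v * m * v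
  let P : Set A := I ∩ {m | 0 ≤ m}
  have hP : IsComplete P := (hI.inter CStarAlgebra.isClosed_nonneg).isComplete
  have hfP : Set.MapsTo f P P := fun m ⟨hmI, hm⟩ =>
    ⟨I.add_mem hkI (I.mul_mem_right _ (I.mul_mem_left _ hmI)),
      add_nonneg hk (star_left_conjugate_nonneg hm v)⟩
  have hf : LipschitzWith (‖v‖₊ ^ 2) f := LipschitzWith.of_dist_le_mul fun m n =>
    calc dist (f m) (f n) = ‖star v * (m - n) * v‖ := by
          simp only [f, dist_eq_norm, mul_sub, sub_mul, add_sub_add_left_eq_sub]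
      _ ≤ ‖star v‖ * ‖m - n‖ * ‖v‖ := norm_mul₃_le
      _ = ‖v‖ ^ 2 * dist m n := by rw [norm_star, dist_eq_norm]; ring
  have hf_contr : ContractingWith (‖v‖₊ ^ 2) (hfP.restrict f P P) :=
    ⟨pow_lt_one₀ zero_le (show ‖v‖₊ < 1 from hv) two_ne_zero,
      hf.lipschitzOnWith.mapsToRestrict hfP⟩
  obtain ⟨m, ⟨hmI, hm⟩, hfm, -⟩ :=
    hf_contr.exists_fixedPoint' hP hfP (x := 0) ⟨I.zero_mem, le_rfl⟩ (edist_ne_top _ _)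
  exact ⟨m, hmI, hm, sub_eq_of_eq_add hfm.symm⟩

lemma exists_nonneg_mem_le_mul_add_mul (hI : IsClosed (I : Set A)) {s k : A}
    (hs : IsStrictlyPositive s) (hk : 0 ≤ k) (hkI : k ∈ I) :
    ∃ m ∈ I, 0 ≤ m ∧ k ≤ s * m + m * s := by
  obtain ⟨r, hr, hv⟩ := exists_pos_norm_one_sub_smul_lt_one hs
  obtain ⟨m, hmI, hm, hm_eq⟩ := exists_nonneg_mem_sub_star_mul_mul_eq hI hv
    (smul_nonneg hr.le hk) (I.smul_of_tower_mem r hkI)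
  have h_star : star (1 - r • s) = 1 - r • s := by simp [hs.isSelfAdjoint.star_eq]
  have h_eq : s * m + m * s = k + r • (s * m * s) := by
    refine smul_right_injective A hr.ne' ?_
    calc r • (s * m + m * s)
        = m - (1 - r • s) * m * (1 - r • s) + r • r • (s * m * s) := by
          simp only [sub_mul, mul_sub, one_mul, mul_one, smul_mul_assoc, mul_smul_comm, smul_add,
            smul_sub]
          abel
      _ = r • (k + r • (s * m * s)) := by rw [h_star] at hm_eq; rw [hm_eq, smul_add]
  refine ⟨m, hmI, hm, h_eq ▸ le_add_of_nonneg_right ?_⟩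
  exact smul_nonneg hr.le (hs.isSelfAdjoint.conjugate_nonneg hm)

lemma exists_isSelfAdjoint_sub_one_mem_mul_add_mul_le (hI : IsClosed (I : Set A)) {s k : A}
    (hs : IsStrictlyPositive s) (hk : 0 ≤ k) (hkI : k ∈ I) :
    ∃ x : A, IsSelfAdjoint x ∧ x - 1 ∈ I ∧ x * (s + k) * x ≤ s := by
  obtain ⟨m, hmI, hm, hkm⟩ := exists_nonneg_mem_le_mul_add_mul hI hs hk hkI
  obtain ⟨w, hw⟩ : IsUnit (1 + m) := CStarAlgebra.isUnit_of_le 1 (le_add_of_nonneg_right hm)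
  have hw_sa : IsSelfAdjoint w := Units.ext (by simp [hw, (IsSelfAdjoint.of_nonneg hm).star_eq])
  have hx_sa : IsSelfAdjoint (w⁻¹ : Aˣ).val := congrArg Units.val hw_sa.inv
  refine ⟨↑w⁻¹, hx_sa, ?_, ?_⟩
  · have : (w⁻¹ : Aˣ).val - 1 = -(↑w⁻¹ * m) := by
      rw [eq_sub_of_add_eq' hw.symm]
      simp [mul_sub]
    exact this ▸ I.neg_mem (I.mul_mem_left _ hmI)
  · have hsk : s + k ≤ w * s * star w.val := by
      rw [← Units.coe_star, hw_sa.star_eq, hw]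
      exact add_le_one_add_mul_mul_one_add hs.nonneg (.of_nonneg hm) hkm
    simpa only [hx_sa.star_eq] using inv_mul_mul_star_inv_le_iff.mpr hsk

lemma exists_isSelfAdjoint_sub_mem_mul_mul_le (hI : IsClosed (I : Set A)) {s k y : A}
    (hs : IsStrictlyPositive s) (hk : 0 ≤ k) (hkI : k ∈ I) (hy : IsSelfAdjoint y) {c : ℝ}
    (hc : 0 < c) (h : y * s * y ≤ c • s + k) :
    ∃ z : A, IsSelfAdjoint z ∧ z - y ∈ I ∧ z * s * z ≤ c • s := by
  have hck : 0 ≤ c⁻¹ • k := smul_nonneg (inv_nonneg.mpr hc.le) hk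
  obtain ⟨x, hx, hxI, hxsk⟩ :=
    exists_isSelfAdjoint_sub_one_mem_mul_add_mul_le hI hs hck (I.smul_of_tower_mem c⁻¹ hkI)
  have hxs : x * s * x ≤ s := (hx.conjugate_le_conjugate (le_add_of_nonneg_right hck)).trans hxsk
  refine ⟨x * y * x, hy.conjugate_self hx, ?_, ?_⟩
  · have : x * y * x - y = (x - 1) * (y * x) + y * (x - 1) := by noncomm_ring
    exact this ▸ I.add_mem (I.mul_mem_right _ hxI) (I.mul_mem_left _ hxI)
  · calc x * y * x * s * (x * y * x) = x * (y * (x * s * x) * y) * x := by noncomm_ring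
      _ ≤ x * (y * s * y) * x := hx.conjugate_le_conjugate (hy.conjugate_le_conjugate hxs)
      _ ≤ x * (c • s + k) * x := hx.conjugate_le_conjugate h
      _ = c • (x * (s + c⁻¹ • k) * x) := by
        rw [← smul_mul_assoc, ← mul_smul_comm, smul_add, smul_inv_smul₀ hc.ne']
      _ ≤ c • s := by gcongr

end CStarAlgebra

lemma exists_isSelfAdjoint_map_eq {A B : Type*} [Ring A] [StarRing A] [Algebra ℂ A]
    [StarModule ℂ A] [Ring B] [StarRing B] [Algebra ℂ B] (q : A →⋆ₐ[ℂ] B) {a : A}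
    (ha : IsSelfAdjoint (q a)) : ∃ b, IsSelfAdjoint b ∧ q b = q a := by
  refine ⟨ℜ a, (ℜ a).2, ?_⟩
  rw [realPart_apply_coe, LinearMapClass.map_smul_of_tower q, map_add, map_star, ha.star_eq,
    ← two_smul ℝ, inv_smul_smul₀ two_ne_zero]

section Quotient

variable {A B : Type*} [CStarAlgebra A] [CStarAlgebra B]

lemma exists_nonneg_map_eq_zero_le_add [PartialOrder A] [StarOrderedRing A] [PartialOrder B]
    [StarOrderedRing B] (q : A →⋆ₐ[ℂ] B) {a b : A} (ha : IsSelfAdjoint a) (hb : IsSelfAdjoint b)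
    (h : q a ≤ q b) : ∃ k, 0 ≤ k ∧ q k = 0 ∧ a ≤ b + k := by
  have hab : IsSelfAdjoint (a - b) := ha.sub hb
  refine ⟨(a - b)⁺, CFC.posPart_nonneg _, ?_, sub_le_iff_le_add'.mp (CFC.le_posPart hab)⟩
  have h_map : q (a - b)⁺ = (q (a - b))⁺ :=
    NonUnitalStarAlgHomClass.map_cfcₙ (S := ℂ) q _ (a - b) (hφ := map_continuous q)
      (hφa := hab.map q)
  rw [h_map, CFC.posPart_eq_zero_iff _ (hab.map q), map_sub]
  exact sub_nonpos.mpr h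

theorem stmt_13_general (q : A →⋆ₐ[ℂ] B) (u : Aˣ) {a : A} (ha : IsSelfAdjoint (q a)) :
    ∃ Y : A, IsSelfAdjoint Y ∧ q Y = q a ∧ ‖↑u⁻¹ * Y * u‖ ≤ ‖q (↑u⁻¹ * a * u)‖ := by
  let _ : PartialOrder A := CStarAlgebra.spectralOrder A
  have _ : StarOrderedRing A := CStarAlgebra.spectralOrderedRing A
  let _ : PartialOrder B := CStarAlgebra.spectralOrder B
  have _ : StarOrderedRing B := CStarAlgebra.spectralOrderedRing B
  obtain ⟨b, hb, hba⟩ := exists_isSelfAdjoint_map_eq q ha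
  let C : ℝ := ‖q (↑u⁻¹ * a * u)‖
  obtain hC0 | hC0 := (show 0 ≤ C from norm_nonneg _).eq_or_lt
  · have hqa : q a = 0 := by
      simpa [C, (u.isUnit.map q).mul_left_eq_zero, (u⁻¹.isUnit.map q).mul_right_eq_zero]
        using hC0.symm
    exact ⟨0, .zero A, by rw [map_zero, hqa], by simp⟩
  let s : A := u * star u.val
  have hs_pos : IsStrictlyPositive s :=
    (u.isUnit.mul u.isUnit.star).isStrictlyPositive (mul_star_self_nonneg _)
  have hbs : q (b * s * b) ≤ q (C ^ 2 • s) := by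
    have := (norm_inv_mul_mul_le_iff (u := Units.map q u) ha hC0.le).mp (by simp [C])
    simpa [s, hba, map_real_smul q (map_continuous q), map_star] using this
  obtain ⟨k, hk, hqk, hbk⟩ := exists_nonneg_map_eq_zero_le_add q
    (hs_pos.isSelfAdjoint.conjugate_self hb) (.smul (.all _) hs_pos.isSelfAdjoint) hbs
  have hI : IsClosed (RingHom.ker q : Set A) := isClosed_singleton.preimage (map_continuous q)
  obtain ⟨Y, hY, hYb, hYs⟩ :=
    exists_isSelfAdjoint_sub_mem_mul_mul_le hI hs_pos hk hqk hb (by positivity) hbk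
  refine ⟨Y, hY, ?_, (norm_inv_mul_mul_le_iff hY hC0.le).mpr hYs⟩
  rw [← hba, ← sub_eq_zero, ← map_sub]
  exact hYb

end Quotient

/-- Let `A` be a unital C*-algebra, `I` a closed two-sided ideal with
quotient map `q : A → A/I` (encoded as a surjective unital star algebra homomorphism onto
a C*-algebra `B`), `S ∈ A` positive invertible with image `s = q S`, `C ≥ 0`, and
`y ∈ B` self-adjoint with `‖s^{-1/2} y s^{1/2}‖ ≤ C`. Then `y` has a self-adjoint lift
`Y ∈ A` with `‖S^{-1/2} Y S^{1/2}‖ ≤ C`. Here `S^{1/2} = CFC.sqrt S` is the positive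
square root given by continuous functional calculus, `S^{-1/2}` is its inverse, and
`s^{±1/2} = q (S^{±1/2})`. -/
theorem stmt_13 {A B : Type*} [CStarAlgebra A] [PartialOrder A] [StarOrderedRing A]
    [CStarAlgebra B] [PartialOrder B] [StarOrderedRing B]
    (q : A →⋆ₐ[ℂ] B) (hq : Function.Surjective q)
    (S : A) (hS_pos : 0 ≤ S) (hS_inv : IsUnit S)
    (C : ℝ) (hC : 0 ≤ C)
    (y : B) (hy : IsSelfAdjoint y)
    (hnorm : ‖q (Ring.inverse (CFC.sqrt S)) * y * q (CFC.sqrt S)‖ ≤ C) :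
    ∃ Y : A, IsSelfAdjoint Y ∧ q Y = y ∧
      ‖Ring.inverse (CFC.sqrt S) * Y * CFC.sqrt S‖ ≤ C := by
  obtain ⟨a, rfl⟩ := hq y
  obtain ⟨u, hu⟩ := (CFC.isUnit_sqrt_iff S hS_pos).mpr hS_inv
  rw [← hu, Ring.inverse_unit] at hnorm ⊢
  obtain ⟨Y, hY, hqY, hYn⟩ := stmt_13_general q u hy
  exact ⟨Y, hY, hqY, hYn.trans (by simpa using hnorm)⟩
end

section
/- Let A be a unital C*-algebra and b ∈ A an algebraic element whose minimal polynomial is p(t) = (t−λ₁)^{k₁}⋯(t−λₙ)^{kₙ} with distinct λ₁,…,λₙ ∈ ℂ. Let e₁,…,eₙ ∈ A be the spectral idempotents of b, i.e. idempotents with eᵢeⱼ = 0 for i ≠ j, Σᵢ eᵢ = 1, b eᵢ = eᵢ b, and (b−λᵢ)^{kᵢ} eᵢ = 0 for each i. Then: (a) s = Σᵢ eᵢ* eᵢ is positive and invertible in A; (b) the elements pᵢ = s^{1/2} eᵢ s^{−1/2} are projections (pᵢ = pᵢ* = pᵢ²) with Σᵢ pᵢ = 1; and (c) setting c = s^{1/2}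 b s^{−1/2}, one has pᵢ (c−λᵢ)^{kᵢ} pᵢ = 0 for each i and Σᵢ pᵢ c pᵢ = c. -/
/-!
Since `∑ eᵢ = 1`, the Cauchy–Schwarz inequality gives `1 ≤ n • s` for `s = ∑ eᵢ* eᵢ`, so `s` is
invertible. Orthogonality gives `s eᵢ = eᵢ* eᵢ = eᵢ* s`, which says that each `eᵢ` is self-adjoint
for the form `⟨x, y⟩ = x* s y`. Conjugation by `s^{1/2}` is an algebra automorphism that carries
this form to the standard one: it turns the `eᵢ` into projections and preserves every algebraic
relation between `b` and the `eᵢ`.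
-/

section CauchySchwarz

variable {ι R : Type*} [NonUnitalRing R] [StarRing R] [PartialOrder R] [StarOrderedRing R]

lemma star_mul_add_star_mul_le (x y : R) :
    star x * y + star y * x ≤ star x * x + star y * y := by
  have expand : star (x - y) * (x - y) =
      (star x * x + star y * y) - (star x * y + star y * x) := by
    rw [star_sub]
    noncomm_ring
  exact sub_nonneg.mp (expand ▸ star_mul_self_nonneg (x - y))

lemma star_sum_mul_sum_le_card_nsmul_sum (t : Finset ι) (a : ι → R) :
    star (∑ i ∈ t, a i) * ∑ i ∈ t, a i ≤ t.card • ∑ i ∈ t, star (a i) * a i := by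
  classical
  induction t using Finset.induction_on with
  | empty => simp
  | insert j t hj ih =>
    have cross_terms : star (a j) * ∑ i ∈ t, a i + star (∑ i ∈ t, a i) * a j ≤
        t.card • (star (a j) * a j) + ∑ i ∈ t, star (a i) * a i := by
      rw [star_sum, Finset.mul_sum, Finset.sum_mul, ← Finset.sum_add_distrib,
        ← Finset.sum_const, ← Finset.sum_add_distrib]
      exact Finset.sum_le_sum fun i _ => star_mul_add_star_mul_le (a j) (a i)
    rw [Finset.sum_insert hj, Finset.sum_insert hj, Finset.card_insert_of_notMem hj]
    set S := ∑ i ∈ t, a i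
    set T := ∑ i ∈ t, star (a i) * a i
    calc star (a j + S) * (a j + S)
        = star (a j) * a j + (star (a j) * S + star S * a j) + star S * S := by
          rw [star_add]
          noncomm_ring
      _ ≤ star (a j) * a j + (t.card • (star (a j) * a j) + T) + t.card • T := by gcongr
      _ = (t.card + 1) • (star (a j) * a j + T) := by
          simp only [add_smul, smul_add, one_smul]
          abel

end CauchySchwarz

lemma isStrictlyPositive_sum_star_mul_self {ι A : Type*} [CStarAlgebra A] [PartialOrder A]
    [StarOrderedRing A] {t : Finset ι} {a : ι → A} (ha : IsUnit (∑ i ∈ t, a i)) :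
    IsStrictlyPositive (∑ i ∈ t, star (a i) * a i) := by
  have lower_bound : IsStrictlyPositive (star (∑ i ∈ t, a i) * ∑ i ∈ t, a i) :=
    ⟨star_mul_self_nonneg _, ha.star.mul ha⟩
  have unit_nsmul : IsUnit (t.card • ∑ i ∈ t, star (a i) * a i) :=
    (lower_bound.of_le (star_sum_mul_sum_le_card_nsmul_sum t a)).isUnit
  rw [nsmul_eq_mul, (Nat.cast_commute _ _).isUnit_mul_iff] at unit_nsmul
  exact ⟨Finset.sum_nonneg fun i _ => star_mul_self_nonneg (a i), unit_nsmul.2⟩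

lemma isSelfAdjoint_units_conj {M : Type*} [Monoid M] [StarMul M] {u : Mˣ} {x : M}
    (hu : IsSelfAdjoint (u : M)) (hx : star x * (u * u) = u * u * x) :
    IsSelfAdjoint (u * x * ↑u⁻¹) := by
  have hu_inv : star (↑u⁻¹ : M) = ↑u⁻¹ := by
    rw [← Units.coe_star_inv, inv_inj.mpr (Units.ext hu : star u = u)]
  calc star (u * x * ↑u⁻¹)
      = ↑u⁻¹ * (star x * (u * u)) * ↑u⁻¹ := by
        simp only [star_mul, hu.star_eq, hu_inv, mul_assoc, Units.mul_inv, mul_one]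
    _ = u * x * ↑u⁻¹ := by
        rw [hx]
        simp only [mul_assoc, Units.inv_mul_cancel_left]

section OrthogonalIdempotents

variable {ι R : Type*} [Fintype ι] [Semiring R] {e : ι → R}

lemma sum_star_mul_self_mul_of_orthogonalIdempotents [StarRing R]
    (he : OrthogonalIdempotents e) (i : ι) :
    (∑ j, star (e j) * e j) * e i = star (e i) * e i := by
  classical
  simp [Finset.sum_mul, mul_assoc, he.mul_eq]

lemma star_mul_sum_star_mul_self_of_orthogonalIdempotents [StarRing R]
    (he : OrthogonalIdempotents e) (i : ι) :
    star (e i) * ∑ j, star (e j) * e j = (∑ j, star (e j) * e j) * e i := by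
  rw [sum_star_mul_self_mul_of_orthogonalIdempotents he]
  simpa only [star_mul, star_sum, star_star] using
    congrArg star (sum_star_mul_self_mul_of_orthogonalIdempotents he i)

lemma sum_mul_mul_self_of_commute (he : CompleteOrthogonalIdempotents e) {x : R}
    (hx : ∀ i, Commute x (e i)) : ∑ i, e i * x * e i = x := by
  have corner (i : ι) : e i * x * e i = x * e i := by
    rw [← (hx i).eq, mul_assoc, (he.idem i).eq]
  simp only [corner, ← Finset.mul_sum, he.complete, mul_one]

end OrthogonalIdempotents

theorem stmt_14_general {ι A : Type*} [Fintype ι] [CStarAlgebra A] [PartialOrder A]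
    [StarOrderedRing A] {e : ι → A} (he : CompleteOrthogonalIdempotents e)
    {b : A} (hcomm : ∀ i, Commute b (e i)) {lam : ι → ℂ} {k : ι → ℕ}
    (hann : ∀ i, (b - lam i • 1) ^ k i * e i = 0)
    {s r r' : A} (hs : s = ∑ i, star (e i) * e i)
    (hr : r = CFC.sqrt s) (hr' : r' = Ring.inverse r)
    {c : A} (hc : c = r * b * r') {p : ι → A} (hp : ∀ i, p i = r * e i * r') :
    (0 ≤ s ∧ IsUnit s ∧ IsUnit r) ∧
    ((∀ i, IsSelfAdjoint (p i) ∧ IsIdempotentElem (p i)) ∧ ∑ i, p i = 1) ∧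
    ((∀ i, p i * (c - lam i • 1) ^ k i * p i = 0) ∧ ∑ i, p i * c * p i = c) := by
  have s_pos : IsStrictlyPositive s :=
    hs ▸ isStrictlyPositive_sum_star_mul_self (he.complete ▸ isUnit_one)
  have r_pos : IsStrictlyPositive r := hr ▸ s_pos.sqrt
  have r_mul_r : r * r = s := hr ▸ CFC.sqrt_mul_sqrt_self s s_pos.nonneg
  obtain ⟨u, rfl⟩ := r_pos.isUnit
  rw [Ring.inverse_unit] at hr'
  subst hr'
  let φ : A ≃ₐ[ℂ] A := MulSemiringAction.toAlgEquiv ℂ A (ConjAct.toConjAct u)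
  obtain rfl : c = φ b := hc
  obtain rfl : p = φ ∘ e := funext hp
  have p_complete : CompleteOrthogonalIdempotents (φ ∘ e) := he.map (φ : A →+* A)
  have e_symm (i : ι) : star (e i) * (u * u) = u * u * e i := by
    rw [r_mul_r, hs, star_mul_sum_star_mul_self_of_orthogonalIdempotents he.toOrthogonalIdempotents]
  have p_selfAdjoint (i : ι) : IsSelfAdjoint (φ (e i)) :=
    isSelfAdjoint_units_conj (u := u) r_pos.isSelfAdjoint (e_symm i)
  have p_annihilates (i : ι) : (φ b - lam i • 1) ^ k i * φ (e i) = 0 := by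
    simpa only [map_mul, map_pow, map_sub, map_smul, map_one, map_zero] using
      congrArg φ (hann i)
  refine ⟨⟨s_pos.nonneg, s_pos.isUnit, u.isUnit⟩,
    ⟨fun i => ⟨p_selfAdjoint i, p_complete.idem i⟩, p_complete.complete⟩, fun i => ?_,
    sum_mul_mul_self_of_commute p_complete fun i => (hcomm i).map φ⟩
  rw [Function.comp_apply, mul_assoc, p_annihilates, mul_zero]

open Polynomial in
/-- Let `A` be a unital C*-algebra and `b ∈ A` algebraic with minimal
polynomial `p(t) = (t−λ₁)^{k₁}⋯(t−λₙ)^{kₙ}` with distinct roots, and let `e₁, …, eₙ` be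
the spectral idempotents of `b`. Then (a) `s = ∑ eᵢ* eᵢ` is positive and invertible (so
its positive square root `r = s^{1/2}` is invertible, with inverse `r' = s^{-1/2}`);
(b) the elements `pᵢ = s^{1/2} eᵢ s^{-1/2}` are projections with `∑ pᵢ = 1`; and
(c) with `c = s^{1/2} b s^{-1/2}` one has `pᵢ (c−λᵢ)^{kᵢ} pᵢ = 0` for each `i` and
`∑ pᵢ c pᵢ = c`. -/
theorem stmt_14 {A : Type*} [CStarAlgebra A] [PartialOrder A] [StarOrderedRing A]
    (n : ℕ) (lam : Fin n → ℂ) (hlam : Function.Injective lam)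
    (k : Fin n → ℕ) (hk : ∀ i, 1 ≤ k i)
    (b : A)
    (hb : Polynomial.aeval b (∏ i, (X - Polynomial.C (lam i)) ^ k i) = 0)
    (hb_min : ∀ g : ℂ[X], g ≠ 0 →
      g.degree < (∏ i, (X - Polynomial.C (lam i)) ^ k i : ℂ[X]).degree →
      Polynomial.aeval b g ≠ 0)
    (e : Fin n → A)
    (he_idem : ∀ i, e i * e i = e i)
    (he_orth : ∀ i j, i ≠ j → e i * e j = 0)
    (he_sum : ∑ i, e i = 1)
    (he_comm : ∀ i, b * e i = e i * b)
    (he_ann : ∀ i, (b - lam i • 1) ^ k i * e i = 0)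
    (s r r' : A) (hs : s = ∑ i, star (e i) * e i)
    (hr : r = CFC.sqrt s) (hr' : r' = Ring.inverse r)
    (c : A) (hc : c = r * b * r')
    (p : Fin n → A) (hp : ∀ i, p i = r * e i * r') :
    (0 ≤ s ∧ IsUnit s ∧ IsUnit r) ∧
    ((∀ i, IsSelfAdjoint (p i) ∧ IsIdempotentElem (p i)) ∧ ∑ i, p i = 1) ∧
    ((∀ i, p i * (c - lam i • 1) ^ k i * p i = 0) ∧ ∑ i, p i * c * p i = c) :=
  stmt_14_general ⟨⟨he_idem, fun i j => he_orth i j⟩, he_sum⟩ he_comm he_ann hs hr hr' hc hp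
end
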